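/- arXiv:1510.05589 — 3 statements merged into one kernel-verified Lean document; each statement's English description precedes it below -/
import Mathlib

section
/- Let K be a nonempty compact metrizable space with finite fd-height k' = k + 1 (k a natural number). Then there is an 8^(k+1)-good map of C_p(I) onto C_p(K), where I = [0,1]. In particular, the closed unit interval ℓ-dominates K. -/
open Set Function

noncomputable section

/-- Topology of pointwise convergence on `C(X, ℝ)`. -/
def ptTop (X : Type*) [TopologicalSpace X] : TopologicalSpace C(X, ℝ) :=
  TopologicalSpace.induced (fun f => (f : X → ℝ)) Pi.topologicalSpace

/-- `X` ℓ-dominates `Y`: a continuous linear map of `C_p(X)` onto `C_p(Y)`. -/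
def LDominates (X Y : Type*) [TopologicalSpace X] [TopologicalSpace Y] : Prop :=
  ∃ L : C(X, ℝ) →ₗ[ℝ] C(Y, ℝ), @Continuous _ _ (ptTop X) (ptTop Y) L ∧ Surjective L

/-- Covering dimension at most `n`. -/
def CovDimLE (X : Type*) [TopologicalSpace X] (n : ℕ) : Prop :=
  ∀ (ι : Type) (U : ι → Set X), Finite ι → (∀ i, IsOpen (U i)) → (⋃ i, U i) = univ →
    ∃ V : ι → Set X, (∀ i, IsOpen (V i)) ∧ (∀ i, V i ⊆ U i) ∧ (⋃ i, V i) = univ ∧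
      ∀ x : X, {i | x ∈ V i}.ncard ≤ n + 1

/-- Finite (covering) dimensional space. -/
def FinDimSpace (X : Type*) [TopologicalSpace X] : Prop := ∃ n : ℕ, CovDimLE X n

/-- Strongly countable dimensional space. -/
def StronglyCountableDim (X : Type*) [TopologicalSpace X] : Prop :=
  ∃ F : ℕ → Set X, (∀ n, IsClosed (F n)) ∧ (∀ n, FinDimSpace ↥(F n)) ∧ (⋃ n, F n) = univ

/-- `I(S)` relative to a subset: points of `S` with a relatively open
finite dimensional neighbourhood in `S`. -/
def fdI (X : Type*) [TopologicalSpace X] (S : Set X) : Set X :=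
  {x | x ∈ S ∧ ∃ U : Set X, IsOpen U ∧ x ∈ U ∧ FinDimSpace ↥(U ∩ S)}

/-- The transfinite derived sets `K^[α]`. -/
def fdDerived (X : Type*) [TopologicalSpace X] : Ordinal → Set X := fun o =>
  Ordinal.limitRecOn o (univ : Set X)
    (fun _ S => S \ fdI X S)
    (fun o _ ih => ⋂ (o' : Ordinal) (h : o' < o), ih o' h)

/-- A k_ω sequence for `X`. -/
def IsKOmegaSeq (X : Type*) [TopologicalSpace X] (K : ℕ → Set X) : Prop :=
  (∀ n, IsCompact (K n)) ∧ (∀ n, K n ⊆ K (n + 1)) ∧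
  (∀ C : Set X, IsCompact C → ∃ n, C ⊆ K n) ∧
  (∀ A : Set X, (∀ n, ∃ F : Set X, IsClosed F ∧ A ∩ K n = F ∩ K n) → IsClosed A)

def KOmegaSpace (X : Type*) [TopologicalSpace X] : Prop := ∃ K : ℕ → Set X, IsKOmegaSeq X K

/-- Submetrizable: there is a coarser metrizable topology. -/
def Submetrizable (X : Type*) [TopologicalSpace X] : Prop :=
  ∃ t' : TopologicalSpace X, (∀ s : Set X, @IsOpen X t' s → IsOpen s) ∧
    @TopologicalSpace.MetrizableSpace X t'

def Hemicompact (X : Type*) [TopologicalSpace X] : Prop :=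
  ∃ K : ℕ → Set X, (∀ n, IsCompact (K n)) ∧ ∀ C : Set X, IsCompact C → ∃ n, C ⊆ K n

/-- `B` is (functionally) bounded in `X`. -/
def CBounded (X : Type*) [TopologicalSpace X] (B : Set X) : Prop :=
  ∀ f : C(X, ℝ), ∃ M : ℝ, ∀ x ∈ B, |f x| ≤ M

/-- μ-space: closed bounded subsets are compact. -/
def MuSpace (X : Type*) [TopologicalSpace X] : Prop :=
  ∀ B : Set X, IsClosed B → CBounded X B → IsCompact B

/-- `C(K; A)`: continuous functions vanishing on `A`, as a submodule. -/
def Czero (K : Type*) [TopologicalSpace K] (A : Set K) : Submodule ℝ C(K, ℝ) where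
  carrier := {f | ∀ x ∈ A, f x = 0}
  add_mem' := by intro f g hf hg x hx; simp [hf x hx, hg x hx]
  zero_mem' := by intro x hx; simp
  smul_mem' := by intro c f hf x hx; simp [hf x hx]

/-- Pointwise topology on `C(K;A)`. -/
def ptTopSub {K : Type*} [TopologicalSpace K] (A : Set K) :
    TopologicalSpace (Czero K A) :=
  TopologicalSpace.induced (fun f => (f : C(K, ℝ))) (ptTop K)

/-- `c`-good map between relative function spaces. -/
def IsCGood {K₁ K₂ : Type*} [TopologicalSpace K₁] [CompactSpace K₁]
    [TopologicalSpace K₂] [CompactSpace K₂] (A₁ : Set K₁) (A₂ : Set K₂) (c : ℝ)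
    (L : Czero K₁ A₁ →ₗ[ℝ] Czero K₂ A₂) : Prop :=
  @Continuous _ _ (ptTopSub A₁) (ptTopSub A₂) L ∧
  (∀ g : Czero K₁ A₁, ‖(L g : C(K₂, ℝ))‖ ≤ ‖(g : C(K₁, ℝ))‖) ∧
  (∀ f : Czero K₂ A₂, ∃ g : Czero K₁ A₁, L g = f ∧
    ‖(g : C(K₁, ℝ))‖ ≤ c * ‖(f : C(K₂, ℝ))‖)

/-- `c`-good map between full function spaces. -/
def IsCGoodMap {K₁ K₂ : Type*} [TopologicalSpace K₁] [CompactSpace K₁]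
    [TopologicalSpace K₂] [CompactSpace K₂] (c : ℝ)
    (L : C(K₁, ℝ) →ₗ[ℝ] C(K₂, ℝ)) : Prop :=
  @Continuous _ _ (ptTop K₁) (ptTop K₂) L ∧
  (∀ g : C(K₁, ℝ), ‖L g‖ ≤ ‖g‖) ∧
  (∀ f : C(K₂, ℝ), ∃ g : C(K₁, ℝ), L g = f ∧ ‖g‖ ≤ c * ‖f‖)


open Topology Filter in
theorem aux_glue_closed {Z : Type*} [TopologicalSpace Z] [NormalSpace Z] {ι : Type*} [Finite ι]
    (D : ι → Set Z) (hD : ∀ j, IsClosed (D j)) (hdis : ∀ j j', j ≠ j' → Disjoint (D j) (D j'))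
    (u : ι → C(Z, ℝ)) (M : ℝ) (hM : 0 ≤ M) (hu : ∀ j, ∀ z ∈ D j, |u j z| ≤ M) :
    ∃ g : C(Z, ℝ), (∀ z, |g z| ≤ M) ∧ ∀ j, ∀ z ∈ D j, g z = u j z := by
  classical
  let v : Z → ℝ := fun z => if h : ∃ j, z ∈ D j then u h.choose z else 0
  have hv : ∀ j, ∀ z ∈ D j, v z = u j z := by
    intro j z hz
    have h : ∃ j, z ∈ D j := ⟨j, hz⟩
    have : h.choose = j := by
      by_contra hne
      exact Set.disjoint_left.1 (hdis _ _ hne) h.choose_spec hz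
    simp only [v, dif_pos h, this]
  have hcont : ContinuousOn v (⋃ j, D j) := by
    apply (locallyFinite_of_finite D).continuousOn_iUnion hD
    intro j
    exact (u j).continuous.continuousOn.congr (fun z hz => hv j z hz)
  have hcl : IsClosed (⋃ j, D j) := isClosed_iUnion_of_finite hD
  obtain ⟨g, hg, hg'⟩ := ContinuousMap.exists_extension_forall_mem_of_isClosedEmbedding
    (⟨_, hcont.domRestrict⟩ : C((⋃ j, D j : Set Z), ℝ)) (t := Set.Icc (-M) M)
    (by
      rintro ⟨z, hz⟩
      obtain ⟨j, hj⟩ := Set.mem_iUnion.1 hz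
      have := hu j z hj
      simp only [ContinuousMap.coe_mk, Set.domRestrict_apply, hv j z hj]
      exact abs_le.1 this) ⟨0, by simpa using hM⟩ hcl.isClosedEmbedding_subtypeVal
  refine ⟨g, fun z => abs_le.2 (hg z), fun j z hz => ?_⟩
  have := congrFun hg' ⟨z, Set.mem_iUnion.2 ⟨j, hz⟩⟩
  simp only [Function.comp, ContinuousMap.coe_mk, Set.domRestrict_apply, hv j z hz] at this
  exact this

theorem aux_inj_approx {ι : Type*} [Finite ι] (a : ι → ℝ) (ε : ℝ) (hε : 0 < ε) :
    ∃ w : ι → ℝ, Function.Injective w ∧ ∀ i, |w i - a i| < ε := by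
  obtain ⟨n, ⟨e⟩⟩ := Finite.exists_equiv_fin ι
  have h : ∀ i, ∃ r : ℚ, a i - (e i : ℕ) * √2 - ε < r ∧ (r : ℝ) < a i - (e i : ℕ) * √2 + ε :=
    fun i => exists_rat_btwn (by linarith)
  choose r hr1 hr2 using h
  refine ⟨fun i => r i + (e i : ℕ) * √2, ?_, fun i => ?_⟩
  · intro i j hij
    by_contra hne
    have hne' : ((e j : ℕ) : ℤ) - ((e i : ℕ) : ℤ) ≠ 0 := by
      intro h
      apply hne
      apply e.injective
      apply Fin.ext
      omega
    have : ((((e j : ℕ) : ℤ) - ((e i : ℕ) : ℤ) : ℤ) : ℝ) * √2 = ((r i - r j : ℚ) : ℝ) := by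
      push_cast
      simp only at hij
      linarith
    have hirr : Irrational (((((e j : ℕ) : ℤ) - ((e i : ℕ) : ℤ) : ℤ) : ℝ) * √2) :=
      irrational_sqrt_two.intCast_mul hne'
    rw [this] at hirr
    exact (Rat.not_irrational _) hirr
  · rw [abs_lt]; constructor <;> linarith [hr1 i, hr2 i]

open Topology Filter in
theorem aux_generic {Z : Type*} [TopologicalSpace Z] [CompactSpace Z] [T2Space Z]
    (ι : ℕ → Type*) [∀ q, Finite (ι q)] (D : ∀ q, ι q → Set Z)
    (hD : ∀ q j, IsClosed (D q j)) (hdis : ∀ q j j', j ≠ j' → Disjoint (D q j) (D q j'))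
    (hosc : ∀ ψ : C(Z, ℝ), ∀ ε > 0, ∃ q0, ∀ q ≥ q0, ∀ j, ∀ x ∈ D q j, ∀ y ∈ D q j,
      |ψ x - ψ y| ≤ ε) :
    ∃ φ : C(Z, ℝ), ∀ r, ∃ q ≥ r, ∀ j j', j ≠ j' → ∀ x ∈ D q j, ∀ y ∈ D q j', φ x ≠ φ y := by
  classical
  let G : ℕ → Set C(Z, ℝ) := fun r =>
    ⋃ q : {q // r ≤ q}, ⋂ p : {p : ι q × ι q // p.1 ≠ p.2},
      {φ : C(Z, ℝ) | ∀ x ∈ D q p.1.1, ∀ y ∈ D q p.1.2, φ x ≠ φ y}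
  have hopen : ∀ r, IsOpen (G r) := by
    intro r
    refine isOpen_iUnion fun q => isOpen_iInter_of_finite fun p => ?_
    have hc : Continuous (fun φ : C(Z, ℝ) =>
        (φ.comp (⟨Prod.fst, continuous_fst⟩ : C(Z × Z, Z))) -
        (φ.comp (⟨Prod.snd, continuous_snd⟩ : C(Z × Z, Z)))) :=
      (ContinuousMap.continuous_precomp _).sub (ContinuousMap.continuous_precomp _)
    have ho := (ContinuousMap.isOpen_setOfPred_mapsTo (X := Z × Z) (Y := ℝ)
      (((hD q p.1.1).isCompact).prod (hD q p.1.2).isCompact)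
      (isOpen_compl_singleton (x := (0 : ℝ)))).preimage hc
    convert ho using 1
    ext φ
    simp only [Set.mem_ofPred_eq, Set.mem_preimage, Set.MapsTo, Prod.forall, Set.mem_prod,
      Set.mem_compl_iff, Set.mem_singleton_iff, ContinuousMap.sub_apply, ContinuousMap.comp_apply,
      ContinuousMap.coe_mk, sub_eq_zero]
    constructor
    · intro h x y hxy; exact h x hxy.1 y hxy.2
    · intro h x hx y hy; exact h x y ⟨hx, hy⟩
  have hdense : ∀ r, Dense (G r) := by
    intro r
    rw [Metric.dense_iff]
    intro φ η hη
    obtain ⟨q0, hq0⟩ := hosc φ (η / 4) (by linarith)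
    let q := max r q0
    let z : ι q → ℝ := fun j => if h : (D q j).Nonempty then φ h.some else 0
    obtain ⟨w, hw, hwz⟩ := aux_inj_approx z (η / 4) (by linarith)
    obtain ⟨g, hg, hg'⟩ := aux_glue_closed (D q) (hD q) (hdis q)
      (fun j => ContinuousMap.const Z (w j) - φ) (η / 2) (by linarith) (by
        intro j x hx
        have hne : (D q j).Nonempty := ⟨x, hx⟩
        have h1 := hq0 q (le_max_right _ _) j hne.some hne.some_mem x hx
        have h2 := hwz j
        simp only [z, dif_pos hne] at h2
        simp only [ContinuousMap.sub_apply, ContinuousMap.const_apply]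
        have := abs_add_le (w j - φ hne.some) (φ hne.some - φ x)
        rw [sub_add_sub_cancel] at this
        linarith)
    refine ⟨φ + g, ?_, ?_⟩
    · rw [Metric.mem_ball, dist_eq_norm, add_sub_cancel_left]
      refine lt_of_le_of_lt ((ContinuousMap.norm_le _ (by linarith : 0 ≤ η / 2)).2 ?_)
        (by linarith)
      intro x; exact hg x
    · refine Set.mem_iUnion.2 ⟨⟨q, le_max_left _ _⟩, Set.mem_iInter.2 ?_⟩
      rintro ⟨⟨j, j'⟩, hjj⟩ x hx y hy
      simp only [ContinuousMap.add_apply, hg' j x hx, hg' j' y hy, ContinuousMap.sub_apply,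
        ContinuousMap.const_apply, add_sub_cancel]
      exact fun h => hjj (hw h)
  obtain ⟨φ, hφ⟩ := (dense_iInter_of_isOpen_nat hopen hdense).nonempty
  refine ⟨φ, fun r => ?_⟩
  obtain ⟨⟨q, hq⟩, h⟩ := Set.mem_iUnion.1 (Set.mem_iInter.1 hφ r)
  refine ⟨q, hq, fun j j' hjj => ?_⟩
  exact Set.mem_iInter.1 h ⟨(j, j'), hjj⟩

/-- finite dimensional cover property of a subset -/
def auxFD {Y : Type*} [MetricSpace Y] (C : Set Y) (N : ℕ) : Prop :=
  ∀ ε > 0, ∃ (ι : Type) (_ : Finite ι) (V : ι → Set Y), (∀ i, IsOpen (V i)) ∧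
    (∀ i, ∀ x ∈ V i, ∀ y ∈ V i, dist x y ≤ ε) ∧ C ⊆ ⋃ i, V i ∧ ∀ x, {i | x ∈ V i}.ncard ≤ N

theorem auxFD.mono {Y : Type*} [MetricSpace Y] {C C' : Set Y} {N : ℕ} (h : auxFD C' N)
    (hC : C ⊆ C') : auxFD C N := by
  intro ε hε
  obtain ⟨ι, h1, V, h2, h3, h4, h5⟩ := h ε hε
  exact ⟨ι, h1, V, h2, h3, hC.trans h4, h5⟩

theorem auxFD.union {Y : Type*} [MetricSpace Y] {C C' : Set Y} {N N' : ℕ} (h : auxFD C N)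
    (h' : auxFD C' N') : auxFD (C ∪ C') (N + N') := by
  intro ε hε
  obtain ⟨ι, h1, V, h2, h3, h4, h5⟩ := h ε hε
  obtain ⟨ι', h1', V', h2', h3', h4', h5'⟩ := h' ε hε
  refine ⟨ι ⊕ ι', inferInstance, Sum.elim V V', ?_, ?_, ?_, ?_⟩
  · rintro (i | i); exacts [h2 i, h2' i]
  · rintro (i | i); exacts [h3 i, h3' i]
  · rw [Set.iUnion_sum]
    exact Set.union_subset_union h4 h4'
  · intro x
    have : {i | x ∈ Sum.elim V V' i} = (Sum.inl '' {i | x ∈ V i}) ∪ (Sum.inr '' {i | x ∈ V' i}) := by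
      ext (i | i) <;> simp
    rw [this]
    refine (Set.ncard_union_le _ _).trans (add_le_add ?_ ?_)
    · exact (Set.ncard_image_le (Set.toFinite _)).trans (h5 x)
    · exact (Set.ncard_image_le (Set.toFinite _)).trans (h5' x)

open Topology Filter in
theorem auxFD_compact {Y : Type*} [MetricSpace Y] {C : Set Y} (hC : IsCompact C)
    (h : ∀ x ∈ C, ∃ U, IsOpen U ∧ x ∈ U ∧ ∃ N, auxFD U N) : ∃ N, auxFD C N := by
  refine hC.induction_on (p := fun s => ∃ N, auxFD s N) ?_ ?_ ?_ ?_
  · refine ⟨0, fun ε hε => ⟨Empty, inferInstance, fun _ => ∅, ?_, ?_, ?_, ?_⟩⟩ <;> simp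
  · rintro s t hst ⟨N, hN⟩
    exact ⟨N, hN.mono hst⟩
  · rintro s t ⟨N, hN⟩ ⟨N', hN'⟩
    exact ⟨_, hN.union hN'⟩
  · intro x hx
    obtain ⟨U, hU, hxU, h⟩ := h x hx
    exact ⟨U, mem_nhdsWithin_of_mem_nhds (hU.mem_nhds hxU), h⟩
open Topology Filter in
theorem aux_families {Y : Type*} [MetricSpace Y] {C : Set Y} (hC : IsClosed C) {N : ℕ}
    (h : auxFD C N) (m : ℕ) (hm : 0 < m) (ε : ℝ) (hε : 0 < ε) :
    ∃ (ι : Type) (_ : Finite ι) (E : Fin m → ι → Set Y), (∀ s j, IsClosed (E s j)) ∧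
      (∀ s j j', j ≠ j' → Disjoint (E s j) (E s j')) ∧
      (∀ s j, ∀ x ∈ E s j, ∀ y ∈ E s j, dist x y ≤ ε) ∧
      ∀ x ∈ C, {s : Fin m | ∀ j, x ∉ E s j}.ncard ≤ N := by
  classical
  obtain ⟨ι, hι, V, hVo, hVd, hVC, hVN⟩ := h ε hε
  obtain ⟨p, hp⟩ := BumpCovering.exists_isSubordinate_of_locallyFinite hC V hVo
    (locallyFinite_of_finite V) hVC
  have hpV : ∀ i x, 0 < p i x → x ∈ V i := by
    intro i x hx
    exact hp i (subset_tsupport _ (by simpa using hx.ne'))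
  have hm' : (0 : ℝ) < m := by exact_mod_cast hm
  refine ⟨{J : Set ι // J.Nonempty}, inferInstance, fun s J =>
    {x | (∀ i ∈ J.1, ((s : ℕ) + 1 : ℝ) ≤ m * p i x) ∧ (∀ i ∉ J.1, m * p i x ≤ ((s : ℕ) : ℝ))},
    ?_, ?_, ?_, ?_⟩
  · intro s J
    have h1 : ∀ i, Continuous fun x => (m : ℝ) * p i x := fun i =>
      continuous_const.mul (p i).continuous
    have : {x | (∀ i ∈ J.1, ((s : ℕ) + 1 : ℝ) ≤ m * p i x) ∧
        (∀ i ∉ J.1, m * p i x ≤ ((s : ℕ) : ℝ))} =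
        (⋂ i, ⋂ (_ : i ∈ J.1), {x | ((s : ℕ) + 1 : ℝ) ≤ m * p i x}) ∩
        ⋂ i, ⋂ (_ : i ∉ J.1), {x | m * p i x ≤ ((s : ℕ) : ℝ)} := by ext; simp
    beta_reduce
    rw [this]
    refine IsClosed.inter ?_ ?_
    · exact isClosed_iInter fun i => isClosed_iInter fun _ =>
        isClosed_le continuous_const (h1 i)
    · exact isClosed_iInter fun i => isClosed_iInter fun _ =>
        isClosed_le (h1 i) continuous_const
  · intro s J J' hne
    rw [Set.disjoint_left]
    rintro x ⟨hx1, hx2⟩ ⟨hx1', hx2'⟩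
    apply hne
    ext i
    constructor
    · intro hi
      by_contra hi'
      linarith [hx1 i hi, hx2' i hi']
    · intro hi'
      by_contra hi
      linarith [hx1' i hi', hx2 i hi]
  · rintro s ⟨J, i, hi⟩ x ⟨hx, -⟩ y ⟨hy, -⟩
    have key : ∀ z, ((s : ℕ) + 1 : ℝ) ≤ m * p i z → z ∈ V i := by
      intro z hz
      apply hpV
      by_contra hcon
      have : (m : ℝ) * p i z ≤ 0 := mul_nonpos_of_nonneg_of_nonpos hm'.le (not_lt.1 hcon)
      have : (0 : ℝ) ≤ (s : ℕ) := Nat.cast_nonneg _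
      linarith
    exact hVd i x (key x (hx i hi)) y (key y (hy i hi))
  · intro x hx
    obtain ⟨i0, hi0⟩ := p.eventuallyEq_one' x hx
    have : Nonempty ι := ⟨i0⟩
    have hbad : ∀ s ∈ {s : Fin m | ∀ J : {J : Set ι // J.Nonempty},
        x ∉ {x | (∀ i ∈ J.1, ((s : ℕ) + 1 : ℝ) ≤ m * p i x) ∧
          (∀ i ∉ J.1, m * p i x ≤ ((s : ℕ) : ℝ))}},
        ∃ i, ((s : ℕ) : ℝ) < m * p i x ∧ m * p i x < (s : ℕ) + 1 := by
      intro s hs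
      have hi1 : p i0 x = 1 := hi0.self_of_nhds
      have hs1 : ((s : ℕ) + 1 : ℝ) ≤ m := by exact_mod_cast s.2
      have := hs ⟨{i | ((s : ℕ) + 1 : ℝ) ≤ m * p i x}, i0, by
        show ((s : ℕ) + 1 : ℝ) ≤ m * p i0 x
        rw [hi1]; simpa using hs1⟩
      by_contra! hcon
      apply this
      refine ⟨fun i hi => hi, fun i hi => ?_⟩
      by_contra! h3
      exact hi (hcon i h3)
    choose! a ha1 ha2 using hbad
    refine le_trans (Set.ncard_le_ncard_of_injOn a ?_ ?_ (Set.toFinite _)) (hVN x)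
    · intro s hs
      apply hpV
      have := ha1 s hs
      have h0 : (0 : ℝ) ≤ (s : ℕ) := Nat.cast_nonneg _
      exact (mul_pos_iff_of_pos_left hm').1 (lt_of_le_of_lt h0 this)
    · intro s hs t ht hst
      have h1 := ha1 s hs
      have h2 := ha2 s hs
      have h3 := ha1 t ht
      have h4 := ha2 t ht
      rw [← hst] at h3 h4
      have h5 : ((s : ℕ) : ℝ) < (t : ℕ) + 1 := by linarith
      have h6 : ((t : ℕ) : ℝ) < (s : ℕ) + 1 := by linarith
      have h7 : (s : ℕ) < (t : ℕ) + 1 := by exact_mod_cast h5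
      have h8 : (t : ℕ) < (s : ℕ) + 1 := by exact_mod_cast h6
      apply Fin.ext; omega

open Topology Filter in
theorem aux_iterate {Y : Type*} [TopologicalSpace Y] [CompactSpace Y]
    {W : Type*} [TopologicalSpace W] [CompactSpace W] (T : C(W, ℝ) →ₗ[ℝ] C(Y, ℝ))
    (hT : ∀ g, ‖T g‖ ≤ ‖g‖) (C : Set Y)
    (h : ∀ (f : C(Y, ℝ)) (M : ℝ), 0 ≤ M → (∀ x ∈ C, |f x| ≤ M) →
      ∃ g : C(W, ℝ), ‖g‖ ≤ M ∧ ∀ x ∈ C, |f x - T g x| ≤ M / 4)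
    (f : C(Y, ℝ)) (M : ℝ) (hM : 0 ≤ M) (hf : ∀ x ∈ C, |f x| ≤ M) :
    ∃ g : C(W, ℝ), ‖g‖ ≤ 4 / 3 * M ∧ ∀ x ∈ C, T g x = f x := by
  choose! G hG1 hG2 using h
  let F : ℕ → C(Y, ℝ) := fun n => Nat.rec f (fun n F => F - T (G F (M * (1 / 4) ^ n))) n
  have hF0 : F 0 = f := rfl
  have hFs : ∀ n, F (n + 1) = F n - T (G (F n) (M * (1 / 4) ^ n)) := fun n => rfl
  have hM' : ∀ n : ℕ, 0 ≤ M * (1 / 4 : ℝ) ^ n := fun n => by positivity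
  have hF : ∀ n, ∀ x ∈ C, |F n x| ≤ M * (1 / 4) ^ n := by
    intro n
    induction n with
    | zero => simpa [hF0] using hf
    | succ n ih =>
      intro x hx
      have := hG2 (F n) _ (hM' n) ih x hx
      rw [hFs, ContinuousMap.sub_apply, pow_succ]
      linarith
  let g : ℕ → C(W, ℝ) := fun n => G (F n) (M * (1 / 4) ^ n)
  have hg : ∀ n, ‖g n‖ ≤ M * (1 / 4) ^ n := fun n => hG1 _ _ (hM' n) (hF n)
  have hgeo : HasSum (fun n : ℕ => M * (1 / 4 : ℝ) ^ n) (4 / 3 * M) := by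
    have := (hasSum_geometric_of_lt_one (r := (1 / 4 : ℝ)) (by norm_num) (by norm_num)).mul_left M
    have h43 : 4 / 3 * M = M * (1 - 1 / 4)⁻¹ := by norm_num; ring
    rw [h43]; exact this
  have hsum : Summable g := Summable.of_norm_bounded hgeo.summable hg
  refine ⟨∑' n, g n, tsum_of_norm_bounded hgeo hg, fun x hx => ?_⟩
  let Tc : C(W, ℝ) →L[ℝ] C(Y, ℝ) := T.mkContinuous 1 (fun g => by simpa using hT g)
  have h1 : Tendsto (fun n => (Tc (∑ i ∈ Finset.range n, g i)) x) atTop (𝓝 (Tc (∑' n, g n) x)) := by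
    have ht := hsum.hasSum.tendsto_sum_nat
    have hc : Continuous (fun u => (Tc u) x) := (continuous_eval_const x).comp Tc.continuous
    exact (hc.tendsto _).comp ht
  have h2 : ∀ n, (Tc (∑ i ∈ Finset.range n, g i)) x = f x - F n x := by
    intro n
    induction n with
    | zero => simp [hF0]
    | succ n ih =>
      rw [Finset.sum_range_succ, map_add, ContinuousMap.add_apply, ih, hFs, ContinuousMap.sub_apply]
      show f x - F n x + T (g n) x = _
      ring
  have h3 : Tendsto (fun n => F n x) atTop (𝓝 0) := by
    apply squeeze_zero_norm (a := fun n => M * (1 / 4) ^ n) (fun n => hF n x hx)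
    have := (tendsto_pow_atTop_nhds_zero_of_lt_one (r := (1 / 4 : ℝ)) (by norm_num)
      (by norm_num)).const_mul M
    simpa using this
  have h4 : Tendsto (fun n => (Tc (∑ i ∈ Finset.range n, g i)) x) atTop (𝓝 (f x)) := by
    simp_rw [h2]
    simpa using (tendsto_const_nhds (x := f x)).sub h3
  exact tendsto_nhds_unique h1 h4

/-- averaging operator -/
def auxAvg {Y W : Type*} [TopologicalSpace Y] [TopologicalSpace W] (m : ℕ)
    (φ : Fin m → C(Y, W)) : C(W, ℝ) →ₗ[ℝ] C(Y, ℝ) where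
  toFun g := (m : ℝ)⁻¹ • ∑ s, g.comp (φ s)
  map_add' g h := by
    ext x; simp [Finset.sum_add_distrib]
  map_smul' c g := by
    ext x; simp [Finset.mul_sum]; congr 1; ext s; ring

theorem auxAvg_apply {Y W : Type*} [TopologicalSpace Y] [TopologicalSpace W] (m : ℕ)
    (φ : Fin m → C(Y, W)) (g : C(W, ℝ)) (x : Y) :
    auxAvg m φ g x = (m : ℝ)⁻¹ * ∑ s, g (φ s x) := by
  simp [auxAvg]

theorem auxAvg_norm {Y W : Type*} [TopologicalSpace Y] [TopologicalSpace W] [CompactSpace Y]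
    [CompactSpace W] (m : ℕ)
    (φ : Fin m → C(Y, W)) (g : C(W, ℝ)) : ‖auxAvg m φ g‖ ≤ ‖g‖ := by
  rw [ContinuousMap.norm_le _ (norm_nonneg _)]
  intro x
  rw [auxAvg_apply, Real.norm_eq_abs, abs_mul]
  rcases Nat.eq_zero_or_pos m with rfl | hm
  · simp
  have hm' : (0 : ℝ) < m := by exact_mod_cast hm
  rw [abs_of_pos (inv_pos.2 hm'), inv_mul_le_iff₀ hm']
  refine (Finset.abs_sum_le_sum_abs _ _).trans ?_
  refine (Finset.sum_le_sum (fun s _ => g.norm_coe_le_norm (φ s x))).trans ?_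
  simp

open Topology Filter in
theorem aux_layer {Y : Type*} [MetricSpace Y] [CompactSpace Y] {C : Set Y} (hC : IsClosed C)
    (h : ∃ N, auxFD C N) :
    ∃ (m : ℕ) (φ : Fin m → C(Y, unitInterval)), ∀ (f : C(Y, ℝ)) (M : ℝ), 0 ≤ M →
      (∀ x ∈ C, |f x| ≤ M) →
      ∃ g : C(unitInterval, ℝ), ‖g‖ ≤ 4 / 3 * M ∧ ∀ x ∈ C, auxAvg m φ g x = f x := by
  classical
  obtain ⟨N, hN⟩ := h
  let m := 16 * N + 1
  have hm : 0 < m := Nat.succ_pos _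
  have hm' : (0 : ℝ) < m := by exact_mod_cast hm
  have hfam := fun q : ℕ => aux_families hC hN m hm (1 / ((q : ℝ) + 1)) (by positivity)
  choose ι hι E hEc hEd hEm hEN using hfam
  let D : ∀ q, (Fin m × ι q) → Set (Fin m × Y) := fun q p => {p.1} ×ˢ (E q p.1 p.2)
  have hDc : ∀ q j, IsClosed (D q j) := fun q p => isClosed_singleton.prod (hEc _ _ _)
  have hunif : ∀ ψ : C(Y, ℝ), ∀ ε > 0, ∃ q0 : ℕ, ∀ q ≥ q0, ∀ x y : Y,
      dist x y ≤ 1 / ((q : ℝ) + 1) → |ψ x - ψ y| ≤ ε := by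
    intro ψ ε hε
    obtain ⟨δ, hδ, hψ⟩ := Metric.uniformContinuous_iff.1
      (CompactSpace.uniformContinuous_of_continuous ψ.continuous) ε hε
    obtain ⟨q0, hq0⟩ := exists_nat_one_div_lt hδ
    refine ⟨q0, fun q hq x y hxy => ?_⟩
    refine (hψ (lt_of_le_of_lt hxy (lt_of_le_of_lt ?_ hq0))).le
    have : (q0 : ℝ) ≤ q := by exact_mod_cast hq
    apply one_div_le_one_div_of_le <;> [positivity; linarith]
  obtain ⟨φ, hφ⟩ := aux_generic (Z := Fin m × Y) (fun q => Fin m × ι q) D hDc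
    (by
      rintro q ⟨s, j⟩ ⟨s', j'⟩ hne
      rw [Set.disjoint_left]
      rintro ⟨t, x⟩ ⟨h1, h2⟩ ⟨h3, h4⟩
      simp only [Set.mem_singleton_iff] at h1 h3 h2 h4
      subst h1
      subst h3
      refine Set.disjoint_left.1 (hEd q t j j' ?_) h2 h4
      rintro rfl; exact hne rfl)
    (by
      intro ψ ε hε
      have := fun s : Fin m => hunif (ψ.comp ⟨fun y => (s, y), by fun_prop⟩) ε hε
      choose q0 hq0 using this
      refine ⟨Finset.univ.sup q0, ?_⟩
      rintro q hq ⟨s, j⟩ ⟨t, x⟩ ⟨h1, h2⟩ ⟨t', y⟩ ⟨h3, h4⟩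
      simp only [Set.mem_singleton_iff] at h1 h3 h2 h4
      subst h1
      subst h3
      exact hq0 t' q (le_trans (Finset.le_sup (Finset.mem_univ _)) hq) x y
        (hEm q t' j x h2 y h4))
  have hφI : ∀ z, (1 + φ z / (‖φ‖ + 1)) / 2 ∈ unitInterval := by
    intro z
    have h1 : |φ z / (‖φ‖ + 1)| ≤ 1 := by
      rw [abs_div, abs_of_pos (by positivity : 0 < ‖φ‖ + 1), div_le_one (by positivity)]
      have := φ.norm_coe_le_norm z
      rw [Real.norm_eq_abs] at this
      linarith
    have := abs_le.1 h1
    constructor <;> linarith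
  let Φ : C(Fin m × Y, unitInterval) := ⟨fun z => ⟨_, hφI z⟩, by fun_prop⟩
  have hΦ : ∀ z z', Φ z = Φ z' → φ z = φ z' := by
    intro z z' hzz
    have h1 : (1 + φ z / (‖φ‖ + 1)) / 2 = (1 + φ z' / (‖φ‖ + 1)) / 2 := congrArg Subtype.val hzz
    have h2 : φ z / (‖φ‖ + 1) = φ z' / (‖φ‖ + 1) := by linarith
    exact (div_left_inj' (by positivity)).1 h2
  let φs : Fin m → C(Y, unitInterval) := fun s => Φ.comp ⟨fun y => (s, y), by fun_prop⟩
  refine ⟨m, φs, aux_iterate (auxAvg m φs) (auxAvg_norm m φs) C ?_⟩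
  intro f M hM hf
  rcases hM.eq_or_lt with rfl | hMpos
  · refine ⟨0, by simp, fun x hx => ?_⟩
    simpa using hf x hx
  obtain ⟨q0, hq0⟩ := hunif f (M / 8) (by linarith)
  obtain ⟨q, hq, hsep⟩ := hφ q0
  let v : Fin m × ι q → ℝ := fun p =>
    if h : (E q p.1 p.2 ∩ C).Nonempty then f h.some else 0
  obtain ⟨g, hg, hg'⟩ := aux_glue_closed (fun p => Φ '' (D q p))
    (fun p => ((hDc q p).isCompact.image Φ.continuous).isClosed)
    (by
      intro p p' hpp
      rw [Set.disjoint_left]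
      rintro t ⟨z, hz, rfl⟩ ⟨z', hz', hzz⟩
      exact hsep p p' hpp z hz z' hz' (hΦ _ _ hzz.symm))
    (fun p => ContinuousMap.const _ (v p)) M hM (by
      intro p t _
      simp only [ContinuousMap.const_apply, v]
      split_ifs with h
      · exact hf _ h.some_mem.2
      · simpa using hM)
  refine ⟨g, (ContinuousMap.norm_le _ hM).2 hg, fun x hx => ?_⟩
  rw [auxAvg_apply]
  let bad : Set (Fin m) := {s | ∀ j, x ∉ E q s j}
  have hbad : bad.ncard ≤ N := hEN q x hx
  have hterm : ∀ s, |f x - g (φs s x)| ≤ M / 8 + if s ∈ bad then 2 * M else 0 := by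
    intro s
    by_cases hs : s ∈ bad
    · rw [if_pos hs]
      have h1 := abs_le.1 (hf x hx)
      have h2 := abs_le.1 (hg (φs s x))
      rw [abs_le]
      constructor <;> linarith
    · rw [if_neg hs]
      have : ∃ j, x ∈ E q s j := by
        by_contra! hcon
        exact hs hcon
      obtain ⟨j, hj⟩ := this
      have hgx : g (φs s x) = v (s, j) :=
        hg' (s, j) (φs s x) ⟨(s, x), ⟨rfl, hj⟩, rfl⟩
      have hne : (E q s j ∩ C).Nonempty := ⟨x, hj, hx⟩
      rw [hgx]
      simp only [v, dif_pos hne, add_zero]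
      exact hq0 q hq x _ (hEm q s j x hj _ hne.some_mem.1)
  have heq : f x - (m : ℝ)⁻¹ * ∑ s, g (φs s x) = (m : ℝ)⁻¹ * ∑ s, (f x - g (φs s x)) := by
    rw [Finset.sum_sub_distrib, mul_sub]
    simp [hm'.ne']
  rw [heq, abs_mul, abs_of_pos (inv_pos.2 hm'), inv_mul_le_iff₀ hm']
  refine (Finset.abs_sum_le_sum_abs _ _).trans ((Finset.sum_le_sum fun s _ => hterm s).trans ?_)
  rw [Finset.sum_add_distrib, ← Finset.sum_filter, Finset.sum_const, Finset.sum_const]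
  have hcard : (Finset.univ.filter (· ∈ bad)).card ≤ N := by
    rw [← Set.ncard_coe_finset]
    simpa using hbad
  have hcard' : (((Finset.univ.filter (· ∈ bad)).card : ℕ) : ℝ) ≤ N := by exact_mod_cast hcard
  have hmN : (m : ℝ) = 16 * N + 1 := by simp [m]
  simp only [Finset.card_univ, Fintype.card_fin, nsmul_eq_mul]
  rw [hmN]
  nlinarith [mul_le_mul_of_nonneg_right hcard' hM]
open Topology Filter in
theorem aux_series {Y : Type*} [TopologicalSpace Y] [CompactSpace Y] (k : ℕ → C(Y, ℝ))
    (θ : ℕ → Y → ℝ) (h0 : ∀ n x, 0 ≤ θ n x) (h1 : ∀ N x, ∑ n ∈ Finset.range N, θ n x ≤ 1)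
    (hk : ∀ ε > 0, ∃ n0, ∀ n ≥ n0, ∀ x, |k n x| ≤ ε * θ n x) :
    ∃ K : C(Y, ℝ), ∀ x M, (∀ n ≥ M, k n x = 0) → K x = ∑ n ∈ Finset.range M, k n x := by
  have hc : CauchySeq fun N => ∑ n ∈ Finset.range N, k n := by
    rw [Metric.cauchySeq_iff']
    intro ε hε
    obtain ⟨n0, hn0⟩ := hk (ε / 2) (by linarith)
    refine ⟨n0, fun n hn => ?_⟩
    rw [dist_eq_norm, ← Finset.sum_Ico_eq_sub _ hn]
    refine lt_of_le_of_lt ((ContinuousMap.norm_le _ (by linarith : 0 ≤ ε / 2)).2 fun x => ?_)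
      (by linarith : ε / 2 < ε)
    rw [ContinuousMap.coe_sum, Finset.sum_apply, Real.norm_eq_abs]
    refine (Finset.abs_sum_le_sum_abs _ _).trans ?_
    calc ∑ i ∈ Finset.Ico n0 n, |k i x| ≤ ∑ i ∈ Finset.Ico n0 n, ε / 2 * θ i x :=
          Finset.sum_le_sum fun i hi => hn0 i (Finset.mem_Ico.1 hi).1 x
      _ = ε / 2 * ∑ i ∈ Finset.Ico n0 n, θ i x := by rw [Finset.mul_sum]
      _ ≤ ε / 2 * ∑ i ∈ Finset.range n, θ i x := by
          refine mul_le_mul_of_nonneg_left ?_ (by linarith)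
          refine Finset.sum_le_sum_of_subset_of_nonneg ?_ (fun i _ _ => h0 i x)
          intro i hi
          exact Finset.mem_range.2 (Finset.mem_Ico.1 hi).2
      _ ≤ ε / 2 * 1 := mul_le_mul_of_nonneg_left (h1 n x) (by linarith)
      _ = ε / 2 := mul_one _
  obtain ⟨K, hK⟩ := cauchySeq_tendsto_of_complete hc
  refine ⟨K, fun x M hM => ?_⟩
  have ht : Tendsto (fun N => (∑ n ∈ Finset.range N, k n) x) atTop (𝓝 (K x)) :=
    ((continuous_eval_const x).tendsto K).comp hK
  refine tendsto_nhds_unique ht ?_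
  refine tendsto_const_nhds.congr' ?_
  filter_upwards [eventually_ge_atTop M] with N hN
  rw [ContinuousMap.coe_sum, Finset.sum_apply]
  refine Finset.sum_subset (Finset.range_mono hN) ?_
  intro n _ hn
  exact hM n (by simpa using hn)

open Topology Filter in
theorem aux_glue : ∃ h : ℕ → C(unitInterval, unitInterval),
    (∀ g : C(unitInterval, ℝ), ∀ ε > 0, ∃ n0, ∀ n ≥ n0, ∀ t, |g (h n t) - g 0| ≤ ε) ∧
    ∀ (gs : ℕ → C(unitInterval, ℝ)) (M : ℝ), 0 ≤ M → (∀ n, ‖gs n‖ ≤ M) →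
      (∀ ε > 0, ∃ n0, ∀ n ≥ n0, ‖gs n‖ ≤ ε) →
      ∃ g : C(unitInterval, ℝ), ‖g‖ ≤ M ∧ g 0 = 0 ∧ ∀ n, g.comp (h n) = gs n := by
  classical
  have hpos : ∀ n : ℕ, (0 : ℝ) < 4 ^ n := fun n => by positivity
  have h1le : ∀ n : ℕ, (1 : ℝ) ≤ 4 ^ n := fun n => one_le_pow₀ (by norm_num)
  let h : ℕ → C(unitInterval, unitInterval) := fun n =>
    ⟨fun t => ⟨(2 + t) / 4 ^ (n + 1), by
      have h0 := t.2.1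
      have h1 := t.2.2
      refine ⟨by positivity, ?_⟩
      rw [div_le_one (hpos _), pow_succ]
      linarith [h1le n]⟩, by fun_prop⟩
  have hval : ∀ n t, ((h n t : unitInterval) : ℝ) = (2 + t) / 4 ^ (n + 1) := fun n t => rfl
  refine ⟨h, ?_, ?_⟩
  · intro g ε hε
    obtain ⟨δ, hδ, hg⟩ := Metric.continuous_iff.1 g.continuous 0 ε hε
    obtain ⟨n0, hn0⟩ := exists_pow_lt_of_lt_one hδ (by norm_num : (1 / 4 : ℝ) < 1)
    refine ⟨n0, fun n hn t => ?_⟩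
    have : dist (h n t) 0 < δ := by
      have h0 := t.2.1
      have h1 := t.2.2
      rw [Subtype.dist_eq, hval, Real.dist_eq]
      have hnn : (0 : ℝ) ≤ (2 + t) / 4 ^ (n + 1) := by positivity
      rw [Set.Icc.coe_zero, sub_zero, abs_of_nonneg hnn]
      refine lt_of_le_of_lt ?_ hn0
      have h2 : (1 / 4 : ℝ) ^ n ≤ (1 / 4) ^ n0 :=
        pow_le_pow_of_le_one (by norm_num) (by norm_num) hn
      refine le_trans ?_ h2
      rw [div_le_iff₀ (hpos _), one_div, inv_pow, pow_succ]
      have : ((4 : ℝ) ^ n)⁻¹ * (4 ^ n * 4) = 4 := by field_simp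
      linarith
    exact (hg _ this).le
  · intro gs M hM hgs hgs0
    let P : ℕ → unitInterval → Prop := fun n t => 1 < (4 : ℝ) ^ (n + 1) * t ∧ (4 : ℝ) ^ n * t < 1
    have hP : ∀ n n' t, P n t → P n' t → n = n' := by
      have key : ∀ n n' : ℕ, ∀ t, n < n' → P n t → P n' t → False := by
        intro n n' t hlt h1 h2
        have : (4 : ℝ) ^ (n + 1) ≤ 4 ^ n' := pow_le_pow_right₀ (by norm_num) hlt
        have := mul_le_mul_of_nonneg_right this t.2.1
        linarith [h1.1, h2.2]
      intro n n' t h1 h2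
      rcases lt_trichotomy n n' with h | h | h
      · exact (key _ _ _ h h1 h2).elim
      · exact h
      · exact (key _ _ _ h h2 h1).elim
    have hF : ∀ n, ∃ F : C(unitInterval, ℝ), (∀ t, |F t| ≤ ‖gs n‖) ∧ (∀ t, ¬ P n t → F t = 0) ∧
        ∀ t, F (h n t) = gs n t := by
      intro n
      obtain ⟨F, hF1, hF2⟩ := aux_glue_closed (Z := unitInterval) (ι := Bool)
        (fun b => if b then Set.range (h n) else {t | ¬ P n t})
        (by
          intro b
          cases b
          · simp only [Bool.false_eq_true, if_false, P, not_and_or, not_lt]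
            have : {t : unitInterval | (4 : ℝ) ^ (n + 1) * t ≤ 1 ∨ 1 ≤ (4 : ℝ) ^ n * t} =
              {t : unitInterval | (4 : ℝ) ^ (n + 1) * t ≤ 1} ∪
              {t : unitInterval | 1 ≤ (4 : ℝ) ^ n * t} := by ext; simp
            rw [this]
            exact (isClosed_le (by fun_prop) (by fun_prop)).union
              (isClosed_le (by fun_prop) (by fun_prop))
          · simp only [if_true]
            exact (isCompact_range (h n).continuous).isClosed)
        (by
          have key : Disjoint (Set.range (h n)) {t | ¬ P n t} := by
            rw [Set.disjoint_left]
            rintro _ ⟨t, rfl⟩ hn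
            apply hn
            have h0 := t.2.1
            have h1 := t.2.2
            have e1 : (4 : ℝ) ^ (n + 1) * ((h n t : unitInterval) : ℝ) = 2 + t := by
              rw [hval]; field_simp
            refine ⟨by rw [e1]; linarith, ?_⟩
            rw [pow_succ] at e1
            linarith
          intro b b' hne
          cases b <;> cases b' <;> simp at hne ⊢
          · exact key.symm
          · exact key)
        (fun b => if b then (gs n).comp ⟨fun t : unitInterval =>
          Set.projIcc (0 : ℝ) 1 zero_le_one (4 ^ (n + 1) * t - 2), by fun_prop⟩ else 0)
        ‖gs n‖ (norm_nonneg _)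
        (by
          intro b z _
          cases b
          · simp
          · simp only [if_true]
            exact (gs n).norm_coe_le_norm _)
      refine ⟨F, hF1, fun t ht => ?_, fun t => ?_⟩
      · simpa using hF2 false t (by simpa using ht)
      · have := hF2 true (h n t) (by simp)
        rw [this]
        simp only [if_true, ContinuousMap.comp_apply, ContinuousMap.coe_mk]
        congr 1
        have e1 : (4 : ℝ) ^ (n + 1) * ((h n t : unitInterval) : ℝ) - 2 = t := by
          rw [hval]; field_simp; ring
        rw [e1]
        exact Set.projIcc_val zero_le_one t
    choose F hF1 hF2 hF3 using hF
    obtain ⟨g, hg⟩ := aux_series F (fun n t => if P n t then 1 else 0)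
      (by intro n t; split_ifs <;> norm_num)
      (by
        intro N t
        by_cases hex : ∃ n, P n t
        · obtain ⟨n, hn⟩ := hex
          have : ∀ i, (if P i t then (1 : ℝ) else 0) = if i = n then 1 else 0 := by
            intro i
            by_cases hi : i = n
            · subst hi; simp [hn]
            · rw [if_neg hi, if_neg (fun h => hi (hP _ _ _ h hn))]
          simp_rw [this, Finset.sum_ite_eq']
          split_ifs <;> norm_num
        · push Not at hex
          simp [hex])
      (by
        intro ε hε
        obtain ⟨n0, hn0⟩ := hgs0 ε hε
        refine ⟨n0, fun n hn t => ?_⟩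
        split_ifs with hp
        · rw [mul_one]; exact (hF1 n t).trans (hn0 n hn)
        · simp [hF2 n t hp])
    have hgP : ∀ n t, P n t → g t = F n t := by
      intro n t hn
      rw [hg t (n + 1) (fun i hi => hF2 i t (fun h => by have := hP _ _ _ h hn; omega))]
      rw [Finset.sum_eq_single n]
      · intro i _ hi
        exact hF2 i t (fun h => hi (hP _ _ _ h hn))
      · simp
    have hgN : ∀ t, (∀ n, ¬ P n t) → g t = 0 := by
      intro t ht
      rw [hg t 0 (fun i _ => hF2 i t (ht i))]; simp
    refine ⟨g, (ContinuousMap.norm_le _ hM).2 fun t => ?_, hgN 0 ?_, ?_⟩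
    · by_cases hex : ∃ n, P n t
      · obtain ⟨n, hn⟩ := hex
        rw [hgP n t hn]
        exact (hF1 n t).trans (hgs n)
      · push Not at hex
        rw [hgN t hex]; simpa using hM
    · intro n hn
      have := hn.1
      simp at this
      linarith
    · intro n
      ext t
      rw [ContinuousMap.comp_apply, ← hF3 n t]
      apply hgP
      by_contra hcon
      have h0 := t.2.1
      have h1 := t.2.2
      have e1 : (4 : ℝ) ^ (n + 1) * ((h n t : unitInterval) : ℝ) = 2 + t := by
        rw [hval]; field_simp
      apply hcon
      refine ⟨by rw [e1]; linarith, ?_⟩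
      rw [pow_succ] at e1
      linarith

open Topology Filter in
theorem aux_theta {Y : Type*} [MetricSpace Y] (A : Set Y) (hA : IsClosed A) (hne : A.Nonempty) :
    ∃ (θ : ℕ → C(Y, ℝ)) (C : ℕ → Set Y) (N : Y → ℕ),
      (∀ n, IsClosed (C n)) ∧ (∀ n x, x ∈ C n → x ∉ A) ∧ (∀ n x, 0 ≤ θ n x) ∧
      (∀ n x, θ n x ≠ 0 → x ∈ C n) ∧
      (∀ M x, ∑ n ∈ Finset.range M, θ n x ≤ 1) ∧
      (∀ x, x ∉ A → ∀ n ≥ N x, θ n x = 0) ∧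
      (∀ x, x ∉ A → ∑ n ∈ Finset.range (N x), θ n x = 1) ∧
      (∀ ε > 0, ∃ n0, ∀ n ≥ n0, ∀ x ∈ C n, Metric.infDist x A ≤ ε) := by
  let ρ : Y → ℝ := fun x => min 1 (Metric.infDist x A)
  have hρc : Continuous ρ := continuous_const.min (Metric.continuous_infDist_pt A)
  have hρ0 : ∀ x, 0 ≤ ρ x := fun x => le_min zero_le_one Metric.infDist_nonneg
  have hρ1 : ∀ x, ρ x ≤ 1 := fun x => min_le_left _ _
  have hρA : ∀ x ∈ A, ρ x = 0 := fun x hx => by simp [ρ, Metric.infDist_zero_of_mem hx]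
  have hρA' : ∀ x, x ∉ A → 0 < ρ x := fun x hx =>
    lt_min one_pos ((hA.notMem_iff_infDist_pos hne).1 hx)
  let σ : ℕ → Y → ℝ := fun n x => max 0 (min 1 (2 ^ n * ρ x - 1))
  have hσc : ∀ n, Continuous (σ n) := fun n => by
    simp only [σ]; fun_prop
  have hσ0 : ∀ x, σ 0 x = 0 := by
    intro x
    simp only [σ, pow_zero, one_mul]
    apply max_eq_left
    exact (min_le_right _ _).trans (by linarith [hρ1 x])
  have hσ1 : ∀ n x, σ n x ≤ 1 := fun n x => max_le zero_le_one (min_le_left _ _)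
  have hmono : ∀ n x, 2 ^ n * ρ x ≤ 2 ^ (n + 1) * ρ x := by
    intro n x
    rw [pow_succ]
    have := mul_nonneg (pow_nonneg (by norm_num : (0 : ℝ) ≤ 2) n) (hρ0 x)
    linarith
  let θ : ℕ → C(Y, ℝ) := fun n => ⟨fun x => σ (n + 1) x - σ n x, (hσc _).sub (hσc _)⟩
  have hθ : ∀ n x, θ n x = σ (n + 1) x - σ n x := fun n x => rfl
  have hsum : ∀ M x, ∑ n ∈ Finset.range M, θ n x = σ M x := by
    intro M x
    simp_rw [hθ]
    rw [Finset.sum_range_sub (fun n => σ n x), hσ0, sub_zero]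
  have hNex : ∀ x, ∃ N : ℕ, x ∉ A → 2 ≤ 2 ^ N * ρ x := by
    intro x
    by_cases hx : x ∈ A
    · exact ⟨0, fun h => (h hx).elim⟩
    · obtain ⟨N, hN⟩ := pow_unbounded_of_one_lt (2 / ρ x) (by norm_num : (1 : ℝ) < 2)
      exact ⟨N, fun _ => ((div_lt_iff₀ (hρA' x hx)).1 hN).le⟩
  choose N hN using hNex
  have hσN : ∀ x, x ∉ A → ∀ n ≥ N x, σ n x = 1 := by
    intro x hx n hn
    have h1 := hN x hx
    have h2 : (2 : ℝ) ^ N x ≤ 2 ^ n := pow_le_pow_right₀ (by norm_num) hn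
    have h3 := mul_le_mul_of_nonneg_right h2 (hρ0 x)
    simp only [σ]
    rw [min_eq_left (by linarith)]
    exact max_eq_right zero_le_one
  refine ⟨θ, fun n => {x | 1 ≤ 2 ^ (n + 1) * ρ x} ∩ {x | 2 ^ n * ρ x ≤ 2}, N, ?_, ?_, ?_, ?_, ?_, ?_,
    ?_, ?_⟩
  · intro n
    exact (isClosed_le (by fun_prop) (by fun_prop)).inter (isClosed_le (by fun_prop) (by fun_prop))
  · rintro n x ⟨hx, -⟩ hxA
    simp only [Set.mem_ofPred_eq, hρA x hxA] at hx
    linarith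
  · intro n x
    rw [hθ, sub_nonneg]
    exact max_le_max le_rfl (min_le_min le_rfl (by linarith [hmono n x]))
  · intro n x hx
    by_contra hcon
    apply hx
    rw [hθ]
    simp only [Set.mem_inter_iff, Set.mem_ofPred_eq, not_and_or, not_le] at hcon
    rcases hcon with h | h
    · have e1 : σ (n + 1) x = 0 := max_eq_left ((min_le_right _ _).trans (by linarith))
      have e2 : σ n x = 0 := max_eq_left ((min_le_right _ _).trans (by linarith [hmono n x]))
      rw [e1, e2, sub_zero]
    · have e1 : σ (n + 1) x = 1 := by
        simp only [σ]
        rw [min_eq_left (by linarith [hmono n x])]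
        exact max_eq_right zero_le_one
      have e2 : σ n x = 1 := by
        simp only [σ]
        rw [min_eq_left (by linarith)]
        exact max_eq_right zero_le_one
      rw [e1, e2, sub_self]
  · intro M x; rw [hsum]; exact hσ1 M x
  · intro x hx n hn
    rw [hθ, hσN x hx n hn, hσN x hx (n + 1) (by omega), sub_self]
  · intro x hx
    rw [hsum]; exact hσN x hx _ le_rfl
  · intro ε hε
    obtain ⟨n0, hn0⟩ := pow_unbounded_of_one_lt (max 2 (2 / ε)) (by norm_num : (1 : ℝ) < 2)
    refine ⟨n0, ?_⟩
    rintro n hn x ⟨-, hx⟩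
    simp only [Set.mem_ofPred_eq] at hx
    have h2 : (2 : ℝ) ^ n0 ≤ 2 ^ n := pow_le_pow_right₀ (by norm_num) hn
    have h3 : (2 : ℝ) < 2 ^ n := lt_of_le_of_lt (le_max_left _ _) (hn0.trans_le h2)
    have h4 : (2 : ℝ) / ε < 2 ^ n := lt_of_le_of_lt (le_max_right _ _) (hn0.trans_le h2)
    have h5 : ρ x < 1 := by
      by_contra! hc
      nlinarith
    have h6 : ρ x = Metric.infDist x A := by
      simp only [ρ] at h5 ⊢
      rcases min_lt_iff.1 h5 with h | h
      · exact absurd h (lt_irrefl _)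
      · exact min_eq_right h.le
    rw [← h6]
    rw [div_lt_iff₀ hε] at h4
    by_contra! hc
    have : (0 : ℝ) < 2 ^ n := by positivity
    nlinarith

theorem aux_pc_eval {X : Type*} [TopologicalSpace X] (x : X) :
    @Continuous _ _ (ptTop X) _ (fun g : C(X, ℝ) => g x) := by
  let _ : TopologicalSpace C(X, ℝ) := ptTop X
  exact (continuous_apply x).comp continuous_induced_dom

theorem aux_pc_add {X : Type*} [TopologicalSpace X] {a b : C(X, ℝ) → ℝ}
    (ha : @Continuous _ _ (ptTop X) _ a) (hb : @Continuous _ _ (ptTop X) _ b) :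
    @Continuous _ _ (ptTop X) _ (fun g : C(X, ℝ) => a g + b g) := by
  let _ : TopologicalSpace C(X, ℝ) := ptTop X
  exact Continuous.add ha hb

theorem aux_pc_sub {X : Type*} [TopologicalSpace X] {a b : C(X, ℝ) → ℝ}
    (ha : @Continuous _ _ (ptTop X) _ a) (hb : @Continuous _ _ (ptTop X) _ b) :
    @Continuous _ _ (ptTop X) _ (fun g : C(X, ℝ) => a g - b g) := by
  let _ : TopologicalSpace C(X, ℝ) := ptTop X
  exact Continuous.sub ha hb

theorem aux_pc_mul {X : Type*} [TopologicalSpace X] {a : C(X, ℝ) → ℝ} (c : ℝ)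
    (ha : @Continuous _ _ (ptTop X) _ a) :
    @Continuous _ _ (ptTop X) _ (fun g : C(X, ℝ) => c * a g) := by
  let _ : TopologicalSpace C(X, ℝ) := ptTop X
  exact Continuous.mul continuous_const ha

theorem aux_pc_sum {X : Type*} [TopologicalSpace X] {ι : Type*} (s : Finset ι)
    {a : ι → C(X, ℝ) → ℝ} (ha : ∀ i ∈ s, @Continuous _ _ (ptTop X) _ (a i)) :
    @Continuous _ _ (ptTop X) _ (fun g : C(X, ℝ) => ∑ i ∈ s, a i g) := by
  let _ : TopologicalSpace C(X, ℝ) := ptTop X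
  exact continuous_finsetSum s ha

theorem aux_pc_iff {X Y : Type*} [TopologicalSpace X] [TopologicalSpace Y]
    (L : C(X, ℝ) → C(Y, ℝ)) : @Continuous _ _ (ptTop X) (ptTop Y) L ↔
      ∀ y, @Continuous _ _ (ptTop X) _ (fun g => L g y) := by
  let _ : TopologicalSpace C(X, ℝ) := ptTop X
  constructor
  · intro h y
    exact (@Continuous.comp _ _ _ (ptTop X) (ptTop Y) _ _ _ (aux_pc_eval y) h)
  · intro h
    exact continuous_induced_rng.2 (continuous_pi h)

open Topology Filter in
theorem aux_extend {Y : Type*} [MetricSpace Y] [CompactSpace Y] (A : Set Y) (hA : IsClosed A)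
    (hne : A.Nonempty) (δ : ℝ) (hδ : 0 < δ) :
    ∃ e : C(A, ℝ) →ₗ[ℝ] C(Y, ℝ), (∀ x, @Continuous _ _ (ptTop A) _ (fun f => e f x)) ∧
      ∀ (f : C(A, ℝ)) (x : Y) (c η : ℝ),
        (∀ a : A, dist x a ≤ Metric.infDist x A + δ → |f a - c| ≤ η) → |e f x - c| ≤ η := by
  classical
  obtain ⟨t, -, htf, htc⟩ := finite_cover_balls_of_compact (isCompact_univ (X := Y))
    (e := δ / 2) (by linarith)
  have : Fintype t := htf.fintype
  obtain ⟨p, hp⟩ := PartitionOfUnity.exists_isSubordinate_of_locallyFinite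
    (isClosed_univ (X := Y)) (fun y : t => Metric.ball (y : Y) (δ / 2))
    (fun y => Metric.isOpen_ball) (locallyFinite_of_finite _) (by
      intro x hx
      obtain ⟨y, hy, hxy⟩ := Set.mem_iUnion₂.1 (htc hx)
      exact Set.mem_iUnion.2 ⟨⟨y, hy⟩, hxy⟩)
  have hp1 : ∀ x, ∑ i, p i x = 1 := by
    intro x
    have := p.sum_eq_one (Set.mem_univ x)
    rwa [finsum_eq_sum_of_fintype] at this
  have hnear : ∀ y : t, ∃ a : A, Metric.infDist (y : Y) A = dist (y : Y) a := by
    intro y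
    obtain ⟨a, ha, h⟩ := hA.isCompact.exists_infDist_eq_dist hne (y : Y)
    exact ⟨⟨a, ha⟩, h⟩
  choose a ha using hnear
  let e : C(A, ℝ) →ₗ[ℝ] C(Y, ℝ) :=
    { toFun := fun f => ∑ i, f (a i) • p i
      map_add' := by
        intro f g
        ext x
        simp [add_mul, Finset.sum_add_distrib]
      map_smul' := by
        intro c f
        ext x
        simp [Finset.mul_sum, mul_assoc] }
  have he : ∀ f x, e f x = ∑ i, p i x * f (a i) := by
    intro f x
    simp [e, mul_comm]
  refine ⟨e, fun x => ?_, fun f x c η hf => ?_⟩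
  · simp_rw [he]
    exact aux_pc_sum _ fun i _ => aux_pc_mul _ (aux_pc_eval (a i))
  · have e1 : e f x - c = ∑ i, p i x * (f (a i) - c) := by
      simp_rw [mul_sub]
      rw [Finset.sum_sub_distrib, ← Finset.sum_mul, hp1, one_mul, he]
    rw [e1]
    refine (Finset.abs_sum_le_sum_abs _ _).trans ?_
    have : ∀ i ∈ Finset.univ, |p i x * (f (a i) - c)| ≤ p i x * η := by
      intro i _
      rw [abs_mul, abs_of_nonneg (p.nonneg i x)]
      rcases (p.nonneg i x).eq_or_lt with h0 | h0
      · rw [← h0]; simp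
      · refine mul_le_mul_of_nonneg_left (hf _ ?_) h0.le
        have hx : x ∈ Metric.ball (i : Y) (δ / 2) := hp i (subset_tsupport _ (by simpa using h0.ne'))
        rw [Metric.mem_ball] at hx
        have h1 := dist_triangle x (i : Y) (a i)
        have h2 : Metric.infDist (i : Y) A ≤ Metric.infDist x A + dist (i : Y) x :=
          Metric.infDist_le_infDist_add_dist
        rw [ha i] at h2
        rw [dist_comm (i : Y) x] at h2
        linarith
    refine (Finset.sum_le_sum this).trans ?_
    rw [← Finset.sum_mul, hp1, one_mul]
/-- precomposition -/
def auxPre {X Y : Type*} [TopologicalSpace X] [TopologicalSpace Y] (h : C(X, Y)) :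
    C(Y, ℝ) →ₗ[ℝ] C(X, ℝ) where
  toFun g := g.comp h
  map_add' _ _ := rfl
  map_smul' _ _ := rfl

theorem auxPre_apply {X Y : Type*} [TopologicalSpace X] [TopologicalSpace Y] (h : C(X, Y))
    (g : C(Y, ℝ)) (x : X) : auxPre h g x = g (h x) := rfl

theorem auxPre_norm {X Y : Type*} [TopologicalSpace X] [TopologicalSpace Y] [CompactSpace X]
    [CompactSpace Y] (h : C(X, Y)) (g : C(Y, ℝ)) : ‖auxPre h g‖ ≤ ‖g‖ :=
  (ContinuousMap.norm_le _ (norm_nonneg _)).2 fun x => g.norm_coe_le_norm (h x)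

theorem auxPre_pc {X Y : Type*} [TopologicalSpace X] [TopologicalSpace Y] (h : C(X, Y)) :
    @Continuous _ _ (ptTop Y) (ptTop X) (auxPre h) :=
  (aux_pc_iff _).2 fun x => aux_pc_eval (h x)

theorem auxAvg_pc {Y W : Type*} [TopologicalSpace Y] [TopologicalSpace W] (m : ℕ)
    (φ : Fin m → C(Y, W)) (x : Y) :
    @Continuous _ _ (ptTop W) _ (fun g => auxAvg m φ g x) := by
  simp_rw [auxAvg_apply]
  exact aux_pc_mul _ (aux_pc_sum _ fun s _ => aux_pc_eval _)

open Topology Filter in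
theorem aux_step {Y : Type*} [MetricSpace Y] [CompactSpace Y] (A : Set Y) [CompactSpace A]
    (hne : A.Nonempty) (hloc : ∀ x, x ∉ A → ∃ U, IsOpen U ∧ x ∈ U ∧ ∃ N, auxFD U N)
    (c : ℝ) (hc : 1 ≤ c) (L₁ : C(unitInterval, ℝ) →ₗ[ℝ] C(A, ℝ)) (hL₁ : IsCGoodMap c L₁) :
    ∃ L : C(unitInterval, ℝ) →ₗ[ℝ] C(Y, ℝ), IsCGoodMap (8 * c) L := by
  classical
  obtain ⟨hL1c, hL1n, hL1s⟩ := hL₁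
  have hA : IsClosed A := (isCompact_iff_compactSpace.2 inferInstance : IsCompact A).isClosed
  obtain ⟨h, hh0, hglue⟩ := aux_glue
  obtain ⟨θ, C, N, hCc, hCA, hθ0, hθC, hθ1, hθN, hθs, hCs⟩ := aux_theta A hA hne
  have hlay := fun n => aux_layer (hCc n) (auxFD_compact (hCc n).isCompact
    (fun x hx => hloc x (hCA n x hx)))
  choose m φ hφ using hlay
  have hext := fun n : ℕ => aux_extend A hA hne (1 / ((n : ℝ) + 1)) (by positivity)
  choose e hec he using hext
  have hen : ∀ n f x, |e n f x| ≤ ‖f‖ := by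
    intro n f x
    have := he n f x 0 ‖f‖ (fun a _ => by
      rw [sub_zero]; exact f.norm_coe_le_norm a)
    simpa using this
  -- uniform closeness
  have hU : ∀ G : C(Y, ℝ), ∀ ε > 0, ∃ n0 : ℕ, ∀ n ≥ n0, ∀ x ∈ C n, ∀ a : A,
      dist x a ≤ Metric.infDist x A + 1 / ((n : ℝ) + 1) → |G a - G x| ≤ ε := by
    intro G ε hε
    obtain ⟨δ, hδ, hG⟩ := Metric.uniformContinuous_iff.1
      (CompactSpace.uniformContinuous_of_continuous G.continuous) ε hε
    obtain ⟨n1, hn1⟩ := hCs (δ / 2) (by linarith)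
    obtain ⟨n2, hn2⟩ := exists_nat_one_div_lt (half_pos hδ)
    refine ⟨max n1 n2, fun n hn x hx a hxa => ?_⟩
    have h1 := hn1 n (le_trans (le_max_left _ _) hn) x hx
    have h2 : 1 / ((n : ℝ) + 1) ≤ 1 / ((n2 : ℝ) + 1) := by
      have : (n2 : ℝ) ≤ n := by exact_mod_cast le_trans (le_max_right _ _) hn
      apply one_div_le_one_div_of_le <;> [positivity; linarith]
    have h3 : dist (a : Y) x < δ := by rw [dist_comm]; linarith
    exact (hG h3).le
  let P₀ : C(unitInterval, ℝ) →ₗ[ℝ] C(A, ℝ) := L₁ ∘ₗ auxPre (h 0)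
  let Q : ℕ → C(unitInterval, ℝ) →ₗ[ℝ] C(unitInterval, ℝ) := fun n =>
    auxPre (h (n + 1)) - auxPre (ContinuousMap.const _ 0)
  let Fl : ℕ → C(unitInterval, ℝ) →ₗ[ℝ] C(Y, ℝ) := fun n =>
    (1 / 8 : ℝ) • (e n ∘ₗ P₀) + (7 / 16 : ℝ) • (auxAvg (m n) (φ n) ∘ₗ Q n)
  have hFl : ∀ n g x, Fl n g x =
      1 / 8 * e n (P₀ g) x + 7 / 16 * auxAvg (m n) (φ n) (Q n g) x := fun n g x => rfl
  have hQ : ∀ n g t, Q n g t = g (h (n + 1) t) - g 0 := fun n g t => rfl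
  have hP₀n : ∀ g, ‖P₀ g‖ ≤ ‖g‖ := fun g => (hL1n _).trans (auxPre_norm _ _)
  have hP₀c : ∀ a, @Continuous _ _ (ptTop unitInterval) _ (fun g => P₀ g a) := by
    intro a
    have h1 := (aux_pc_iff L₁).1 hL1c a
    exact @Continuous.comp _ _ _ (ptTop unitInterval) (ptTop unitInterval) _ _ _ h1
      (auxPre_pc (h 0))
  have hP₀c' : @Continuous _ _ (ptTop unitInterval) (ptTop A) P₀ := (aux_pc_iff _).2 hP₀c
  have hQn : ∀ n g, ‖Q n g‖ ≤ 2 * ‖g‖ := by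
    intro n g
    refine (norm_sub_le _ _).trans ?_
    have h1 := auxPre_norm (h (n + 1)) g
    have h2 := auxPre_norm (ContinuousMap.const unitInterval (0 : unitInterval)) g
    linarith
  have hFln : ∀ n g x, |Fl n g x| ≤ ‖g‖ := by
    intro n g x
    rw [hFl]
    have h1 := (hen n (P₀ g) x).trans (hP₀n g)
    have h2 : |auxAvg (m n) (φ n) (Q n g) x| ≤ 2 * ‖g‖ :=
      (((auxAvg (m n) (φ n) (Q n g)).norm_coe_le_norm x).trans (auxAvg_norm _ _ _)).trans (hQn n g)
    rw [abs_le] at h1 h2 ⊢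
    constructor <;> linarith [h1.1, h1.2, h2.1, h2.2]
  let val : C(unitInterval, ℝ) → Y → ℝ := fun g x =>
    if hx : x ∈ A then 1 / 8 * P₀ g ⟨x, hx⟩ else ∑ n ∈ Finset.range (N x), θ n x * Fl n g x
  have hvalA : ∀ g x (hx : x ∈ A), val g x = 1 / 8 * P₀ g ⟨x, hx⟩ := fun g x hx => dif_pos hx
  have hvalN : ∀ g x, x ∉ A → val g x = ∑ n ∈ Finset.range (N x), θ n x * Fl n g x :=
    fun g x hx => dif_neg hx
  have hθA : ∀ n, ∀ x ∈ A, θ n x = 0 := by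
    intro n x hx
    by_contra hcon
    exact hCA n x (hθC n x hcon) hx
  have hK : ∀ g, ∃ K : C(Y, ℝ), ∀ x, K x = val g x := by
    intro g
    obtain ⟨G, hG⟩ := ContinuousMap.exists_restrict_eq hA ((1 / 8 : ℝ) • P₀ g)
    have hGA : ∀ a : A, G a = 1 / 8 * P₀ g a := fun a => by
      have := DFunLike.congr_fun hG a
      simpa using this
    obtain ⟨K, hK⟩ := aux_series (fun n => θ n * (Fl n g - G)) (fun n x => θ n x) hθ0 hθ1 (by
      intro ε hε
      obtain ⟨n1, hn1⟩ := hU G (ε / 2) (by linarith)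
      obtain ⟨n2, hn2⟩ := hh0 g ε hε
      refine ⟨max n1 n2, fun n hn x => ?_⟩
      rw [ContinuousMap.mul_apply, abs_mul, abs_of_nonneg (hθ0 n x), mul_comm]
      rcases (hθ0 n x).eq_or_lt with h0 | h0
      · rw [← h0]; simp
      refine mul_le_mul_of_nonneg_right ?_ h0.le
      have hxC := hθC n x h0.ne'
      have h1 := he n (P₀ g) x (8 * G x) (4 * ε) (fun a hxa => by
        have := hn1 n (le_trans (le_max_left _ _) hn) x hxC a hxa
        rw [hGA] at this
        rw [abs_le] at this ⊢
        constructor <;> linarith [this.1, this.2])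
      have h2 : |auxAvg (m n) (φ n) (Q n g) x| ≤ ε := by
        refine (((auxAvg (m n) (φ n) (Q n g)).norm_coe_le_norm x).trans (auxAvg_norm _ _ _)).trans ?_
        refine (ContinuousMap.norm_le _ hε.le).2 fun t => ?_
        rw [hQ]
        exact hn2 (n + 1) (by have := le_trans (le_max_right _ _) hn; omega) t
      rw [ContinuousMap.sub_apply, hFl]
      rw [abs_le] at h1 h2 ⊢
      constructor <;> linarith [h1.1, h1.2, h2.1, h2.2])
    refine ⟨K + G, fun x => ?_⟩
    rw [ContinuousMap.add_apply]
    by_cases hx : x ∈ A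
    · rw [hK x 0 (fun n _ => by simp [hθA n x hx]), hvalA g x hx, ← hGA ⟨x, hx⟩]
      simp
    · rw [hK x (N x) (fun n hn => by simp [hθN x hx n hn]), hvalN g x hx]
      simp only [ContinuousMap.mul_apply, ContinuousMap.sub_apply, mul_sub]
      rw [Finset.sum_sub_distrib, ← Finset.sum_mul, hθs x hx]
      ring
  choose K hK using hK
  let L : C(unitInterval, ℝ) →ₗ[ℝ] C(Y, ℝ) :=
    { toFun := K
      map_add' := by
        intro f g
        ext x
        rw [ContinuousMap.add_apply, hK, hK, hK]
        by_cases hx : x ∈ A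
        · rw [hvalA _ x hx, hvalA _ x hx, hvalA _ x hx, map_add, ContinuousMap.add_apply, mul_add]
        · rw [hvalN _ x hx, hvalN _ x hx, hvalN _ x hx, ← Finset.sum_add_distrib]
          refine Finset.sum_congr rfl fun n _ => ?_
          rw [map_add, ContinuousMap.add_apply, mul_add]
      map_smul' := by
        intro r g
        ext x
        rw [ContinuousMap.smul_apply, hK, hK, RingHom.id_apply, smul_eq_mul]
        by_cases hx : x ∈ A
        · rw [hvalA _ x hx, hvalA _ x hx, map_smul, ContinuousMap.smul_apply, smul_eq_mul]; ring
        · rw [hvalN _ x hx, hvalN _ x hx, Finset.mul_sum]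
          refine Finset.sum_congr rfl fun n _ => ?_
          rw [map_smul, ContinuousMap.smul_apply, smul_eq_mul]; ring }
  have hL : ∀ g x, L g x = val g x := hK
  refine ⟨L, ?_, ?_, ?_⟩
  · rw [aux_pc_iff]
    intro x
    simp_rw [hL]
    by_cases hx : x ∈ A
    · simp_rw [hvalA _ x hx]
      exact aux_pc_mul _ (hP₀c _)
    · simp_rw [hvalN _ x hx, hFl]
      refine aux_pc_sum _ fun n _ => aux_pc_mul _ (aux_pc_add (aux_pc_mul _ ?_) (aux_pc_mul _ ?_))
      · exact @Continuous.comp _ _ _ (ptTop unitInterval) (ptTop A) _ _ _ (hec n x) hP₀c'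
      · refine @Continuous.comp _ _ _ (ptTop unitInterval) (ptTop unitInterval) _ _ _
          (auxAvg_pc (m n) (φ n) x) ((aux_pc_iff (Q n)).2 fun t => ?_)
        exact aux_pc_sub (aux_pc_eval _) (aux_pc_eval _)
  · intro g
    refine (ContinuousMap.norm_le _ (norm_nonneg _)).2 fun x => ?_
    rw [hL, Real.norm_eq_abs]
    by_cases hx : x ∈ A
    · rw [hvalA _ x hx, abs_mul, abs_of_pos (by norm_num : (0 : ℝ) < 1 / 8)]
      have h1 : |P₀ g ⟨x, hx⟩| ≤ ‖g‖ := ((P₀ g).norm_coe_le_norm _).trans (hP₀n g)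
      linarith [norm_nonneg g]
    · rw [hvalN _ x hx]
      refine (Finset.abs_sum_le_sum_abs _ _).trans ?_
      have : ∀ n ∈ Finset.range (N x), |θ n x * Fl n g x| ≤ θ n x * ‖g‖ := by
        intro n _
        rw [abs_mul, abs_of_nonneg (hθ0 n x)]
        exact mul_le_mul_of_nonneg_left (hFln n g x) (hθ0 n x)
      refine (Finset.sum_le_sum this).trans ?_
      rw [← Finset.sum_mul, hθs x hx, one_mul]
  · intro f
    let fA : C(A, ℝ) := f.restrict A
    have hfAn : ‖fA‖ ≤ ‖f‖ :=
      (ContinuousMap.norm_le _ (norm_nonneg _)).2 fun a => f.norm_coe_le_norm a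
    obtain ⟨g0, hg0, hg0n⟩ := hL1s ((8 : ℝ) • fA)
    have hCcomp : ∀ n, CompactSpace (C n) := fun n =>
      isCompact_iff_compactSpace.1 (hCc n).isCompact
    let f2 : ℕ → C(Y, ℝ) := fun n => f - e n fA
    let Mn : ℕ → ℝ := fun n => ‖(f2 n).restrict (C n)‖
    have hMn0 : ∀ n, 0 ≤ Mn n := fun n => norm_nonneg _
    have hf2M : ∀ n, ∀ x ∈ C n, |f2 n x| ≤ Mn n := fun n x hx =>
      ((f2 n).restrict (C n)).norm_coe_le_norm ⟨x, hx⟩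
    have hMn2 : ∀ n, Mn n ≤ 2 * ‖f‖ := by
      intro n
      refine (ContinuousMap.norm_le _ (by positivity)).2 fun x => ?_
      show |f x - e n fA x| ≤ _
      have h1 := (hen n fA x).trans hfAn
      have h2 : |f x| ≤ ‖f‖ := f.norm_coe_le_norm x
      rw [abs_le] at h1 h2 ⊢
      constructor <;> linarith [h1.1, h1.2, h2.1, h2.2]
    have hMns : ∀ ε > 0, ∃ n0, ∀ n ≥ n0, Mn n ≤ ε := by
      intro ε hε
      obtain ⟨n0, hn0⟩ := hU f ε hε
      refine ⟨n0, fun n hn => (ContinuousMap.norm_le _ hε.le).2 fun x => ?_⟩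
      show |f x - e n fA x| ≤ _
      rw [abs_sub_comm]
      exact he n fA x (f x) ε fun a ha => hn0 n hn x x.2 a ha
    have hlay : ∀ n, ∃ g : C(unitInterval, ℝ), ‖g‖ ≤ 4 / 3 * (16 / 7 * Mn n) ∧
        ∀ x ∈ C n, auxAvg (m n) (φ n) g x = 16 / 7 * f2 n x := by
      intro n
      obtain ⟨g, h1, h2⟩ := hφ n ((16 / 7 : ℝ) • f2 n) (16 / 7 * Mn n)
        (by have := hMn0 n; positivity) (by
        intro x hx
        rw [ContinuousMap.smul_apply, smul_eq_mul, abs_mul,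
          abs_of_pos (by norm_num : (0 : ℝ) < 16 / 7)]
        exact mul_le_mul_of_nonneg_left (hf2M n x hx) (by norm_num))
      exact ⟨g, h1, fun x hx => by rw [h2 x hx]; rfl⟩
    choose gn hgn1 hgn2 using hlay
    have hcf : ‖f‖ ≤ c * ‖f‖ := le_mul_of_one_le_left (norm_nonneg _) hc
    obtain ⟨g, hgn, hgz, hgc⟩ := hglue (fun n => Nat.casesOn n g0 gn) (8 * c * ‖f‖)
      (by positivity) (by
        intro n
        cases n with
        | zero =>
          refine hg0n.trans ?_
          rw [norm_smul, Real.norm_eq_abs, abs_of_pos (by norm_num : (0 : ℝ) < 8)]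
          have : c * ‖fA‖ ≤ c * ‖f‖ := mul_le_mul_of_nonneg_left hfAn (by linarith)
          linarith
        | succ n =>
          refine (hgn1 n).trans ?_
          linarith [hMn2 n, norm_nonneg f])
      (by
        intro ε hε
        obtain ⟨n0, hn0⟩ := hMns (ε / 4) (by linarith)
        refine ⟨n0 + 1, fun n hn => ?_⟩
        cases n with
        | zero => omega
        | succ n =>
          refine (hgn1 n).trans ?_
          linarith [hn0 n (by omega)])
    refine ⟨g, ?_, hgn⟩
    have hP : P₀ g = (8 : ℝ) • fA := by
      rw [← hg0]
      exact congrArg L₁ (hgc 0)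
    have hQg : ∀ n, Q n g = gn n := by
      intro n
      ext t
      rw [hQ, hgz, sub_zero]
      exact DFunLike.congr_fun (hgc (n + 1)) t
    ext x
    rw [hL]
    by_cases hx : x ∈ A
    · rw [hvalA _ x hx, hP, ContinuousMap.smul_apply, smul_eq_mul]
      show 1 / 8 * (8 * f x) = f x
      ring
    · rw [hvalN _ x hx]
      have : ∀ n ∈ Finset.range (N x), θ n x * Fl n g x = θ n x * f x := by
        intro n _
        by_cases h0 : θ n x = 0
        · rw [h0]; simp
        · have hxC := hθC n x h0
          congr 1
          rw [hFl, hP, hQg, hgn2 n x hxC, map_smul, ContinuousMap.smul_apply, smul_eq_mul]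
          show _ + 7 / 16 * (16 / 7 * (f x - e n fA x)) = f x
          ring
      rw [Finset.sum_congr rfl this, ← Finset.sum_mul, hθs x hx, one_mul]
theorem aux_transport {X Y : Type*} [TopologicalSpace X] [CompactSpace X] [TopologicalSpace Y]
    [CompactSpace Y] (e : X ≃ₜ Y) (c : ℝ) (L : C(unitInterval, ℝ) →ₗ[ℝ] C(X, ℝ))
    (hL : IsCGoodMap c L) : ∃ L' : C(unitInterval, ℝ) →ₗ[ℝ] C(Y, ℝ), IsCGoodMap c L' := by
  obtain ⟨h1, h2, h3⟩ := hL
  refine ⟨auxPre (e.symm : C(Y, X)) ∘ₗ L, ?_, ?_, ?_⟩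
  · rw [aux_pc_iff]
    intro y
    exact (aux_pc_iff L).1 h1 (e.symm y)
  · intro g
    exact (auxPre_norm _ _).trans (h2 g)
  · intro f
    obtain ⟨g, hg, hgn⟩ := h3 (auxPre (e : C(X, Y)) f)
    refine ⟨g, ?_, ?_⟩
    · ext y
      rw [LinearMap.comp_apply, hg, auxPre_apply, auxPre_apply]
      simp
    · have h0 := auxPre_norm (e : C(X, Y)) f
      have h4 := auxPre_norm (e.symm : C(Y, X)) (auxPre (e : C(X, Y)) f)
      have h5 : auxPre (e.symm : C(Y, X)) (auxPre (e : C(X, Y)) f) = f := by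
        ext y; rw [auxPre_apply, auxPre_apply]; simp
      rw [h5] at h4
      rwa [le_antisymm h0 h4] at hgn

theorem aux_fd_local {X : Type*} [MetricSpace X] [CompactSpace X] (S U : Set X) (hU : IsOpen U)
    (h : FinDimSpace ↥(U ∩ S)) : ∃ N, auxFD ((Subtype.val : S → X) ⁻¹' U) N := by
  classical
  obtain ⟨n, hn⟩ := h
  refine ⟨n + 1, fun ε hε => ?_⟩
  obtain ⟨t, -, htf, htc⟩ := finite_cover_balls_of_compact (isCompact_univ (X := X))
    (e := ε / 2) (by linarith)
  have : Finite t := htf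
  obtain ⟨k, ⟨e⟩⟩ := Finite.exists_equiv_fin t
  obtain ⟨V, hVo, hVs, hVc, hVn⟩ := hn (Fin k)
    (fun i => Subtype.val ⁻¹' (Metric.ball ((e.symm i : t) : X) (ε / 2))) inferInstance
    (fun i => Metric.isOpen_ball.preimage continuous_subtype_val) (by
      rw [Set.eq_univ_iff_forall]
      intro x
      obtain ⟨y, hy, hxy⟩ := Set.mem_iUnion₂.1 (htc (Set.mem_univ x.1))
      refine Set.mem_iUnion.2 ⟨e ⟨y, hy⟩, ?_⟩
      simpa using hxy)
  refine ⟨Fin k, inferInstance, fun i => {y : S | ∃ h : y.1 ∈ U, (⟨y.1, h, y.2⟩ : ↥(U ∩ S)) ∈ V i},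
    ?_, ?_, ?_, ?_⟩
  · intro i
    obtain ⟨O, hO, hOV⟩ := isOpen_induced_iff.1 (hVo i)
    have : {y : S | ∃ h : y.1 ∈ U, (⟨y.1, h, y.2⟩ : ↥(U ∩ S)) ∈ V i} =
        Subtype.val ⁻¹' (U ∩ O) := by
      ext y
      rw [← hOV]
      simp
    have h9 : IsOpen ((Subtype.val : S → X) ⁻¹' (U ∩ O)) :=
      (hU.inter hO).preimage continuous_subtype_val
    exact (congrArg IsOpen this).mpr h9
  · rintro i x ⟨hx, hx'⟩ y ⟨hy, hy'⟩
    have h1 := hVs i hx'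
    have h2 := hVs i hy'
    rw [Set.mem_preimage, Metric.mem_ball] at h1 h2
    have := dist_triangle_right (x : X) (y : X) ((e.symm i : t) : X)
    rw [Subtype.dist_eq]
    simp only at h1 h2
    linarith
  · intro y hy
    have : (⟨y.1, hy, y.2⟩ : ↥(U ∩ S)) ∈ ⋃ i, V i := hVc ▸ Set.mem_univ _
    obtain ⟨i, hi⟩ := Set.mem_iUnion.1 this
    exact Set.mem_iUnion.2 ⟨i, hy, hi⟩
  · intro y
    by_cases hy : y.1 ∈ U
    · refine le_trans (Set.ncard_le_ncard ?_ (Set.toFinite _)) (hVn ⟨y.1, hy, y.2⟩)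
      rintro i ⟨_, hi⟩
      exact hi
    · have : {i : Fin k | y ∈ {y : S | ∃ h : y.1 ∈ U, (⟨y.1, h, y.2⟩ : ↥(U ∩ S)) ∈ V i}} = ∅ := by
        ext i
        simp [hy]
      rw [this]
      simp

theorem aux_fdDerived_zero (X : Type*) [TopologicalSpace X] : fdDerived X 0 = univ := by
  simp [fdDerived]

theorem aux_fdDerived_succ (X : Type*) [TopologicalSpace X] (o : Ordinal) :
    fdDerived X (o + 1) = fdDerived X o \ fdI X (fdDerived X o) := by
  simp [fdDerived]

theorem aux_closed_diff (X : Type*) [TopologicalSpace X] (S : Set X) (hS : IsClosed S) :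
    IsClosed (S \ fdI X S) := by
  have : S \ fdI X S = S ∩ (⋃₀ {U : Set X | IsOpen U ∧ FinDimSpace ↥(U ∩ S)})ᶜ := by
    ext x
    simp only [Set.mem_sdiff, fdI, Set.mem_ofPred_eq, Set.mem_inter_iff, Set.mem_compl_iff,
      Set.mem_sUnion]
    constructor
    · rintro ⟨hx, h⟩
      exact ⟨hx, fun ⟨U, ⟨h1, h2⟩, h3⟩ => h ⟨hx, U, h1, h3, h2⟩⟩
    · rintro ⟨hx, h⟩
      exact ⟨hx, fun ⟨_, U, h1, h3, h2⟩ => h ⟨U, ⟨h1, h2⟩, h3⟩⟩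
  rw [this]
  refine hS.inter (isOpen_sUnion ?_).isClosed_compl
  exact fun U hU => hU.1

def auxS (X : Type*) [TopologicalSpace X] : ℕ → Set X
  | 0 => univ
  | n + 1 => auxS X n \ fdI X (auxS X n)

theorem auxS_eq (X : Type*) [TopologicalSpace X] (j : ℕ) :
    fdDerived X (j : Ordinal) = auxS X j := by
  induction j with
  | zero => rw [Nat.cast_zero, aux_fdDerived_zero]; rfl
  | succ j ih => rw [Nat.cast_succ, aux_fdDerived_succ, ih]; rfl

theorem aux_closed_fd (X : Type*) [TopologicalSpace X] (j : ℕ) :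
    IsClosed (auxS X j) := by
  induction j with
  | zero => exact isClosed_univ
  | succ j ih => exact aux_closed_diff X _ ih

theorem aux_main (X : Type*) [MetricSpace X] [CompactSpace X] (S : ℕ → Set X)
    [∀ j, CompactSpace (S j)] (hS : ∀ j, S (j + 1) = S j \ fdI X (S j)) (k : ℕ)
    (h1 : S (k + 1) = ∅) (h2 : (S k).Nonempty) (d : ℕ) : ∀ j, j + d = k →
    ∃ L : C(unitInterval, ℝ) →ₗ[ℝ] C(S j, ℝ), IsCGoodMap ((8 : ℝ) ^ (d + 1)) L := by
  have hloc : ∀ j, ∀ x : S j, x.1 ∉ S (j + 1) → ∃ U, IsOpen U ∧ x ∈ U ∧ ∃ N, auxFD U N := by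
    intro j x hx
    rw [hS] at hx
    have hx' : x.1 ∈ fdI X (S j) := by
      by_contra hc
      exact hx ⟨x.2, hc⟩
    obtain ⟨-, U, hU, hxU, hfd⟩ := hx'
    exact ⟨Subtype.val ⁻¹' U, hU.preimage continuous_subtype_val, hxU, aux_fd_local _ U hU hfd⟩
  induction d with
  | zero =>
    intro j hj
    obtain rfl : j = k := by omega
    obtain ⟨m, φ, hφ⟩ := aux_layer (isClosed_univ (X := S j)) (auxFD_compact isCompact_univ
      (fun x _ => hloc j x (by rw [h1]; exact Set.notMem_empty _)))
    refine ⟨auxAvg m φ, (aux_pc_iff _).2 (auxAvg_pc m φ), auxAvg_norm m φ, fun f => ?_⟩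
    obtain ⟨g, hg, hgx⟩ := hφ f ‖f‖ (norm_nonneg _) (fun x _ => f.norm_coe_le_norm x)
    refine ⟨g, ContinuousMap.ext fun x => hgx x (Set.mem_univ _), hg.trans ?_⟩
    have := norm_nonneg f
    norm_num
    linarith
  | succ d ih =>
    intro j hj
    obtain ⟨L₁, hL₁⟩ := ih (j + 1) (by omega)
    have hsub : ∀ i, S (i + 1) ⊆ S i := fun i => by rw [hS]; exact Set.sdiff_subset
    have hmono : ∀ i, S (j + 1 + i) ⊆ S (j + 1) := by
      intro i
      induction i with
      | zero => exact subset_rfl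
      | succ i ih' => exact (hsub (j + 1 + i)).trans ih'
    have hne : (S (j + 1)).Nonempty := by
      have := hmono d
      rw [show j + 1 + d = k by omega] at this
      exact h2.mono this
    let A : Set (S j) := Subtype.val ⁻¹' S (j + 1)
    let e : S (j + 1) ≃ₜ A :=
      { toFun := fun x => ⟨⟨x.1, hsub j x.2⟩, x.2⟩
        invFun := fun x => ⟨x.1.1, x.2⟩
        left_inv := fun _ => rfl
        right_inv := fun _ => rfl
        continuous_toFun := by fun_prop
        continuous_invFun := by fun_prop }
    have hAc : CompactSpace A := e.compactSpace
    obtain ⟨L₂, hL₂⟩ := aux_transport e _ L₁ hL₁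
    obtain ⟨L, hL⟩ := aux_step A (by
      obtain ⟨x, hx⟩ := hne
      exact ⟨⟨x, hsub j hx⟩, hx⟩) (fun x hx => hloc j x hx) _
      (one_le_pow₀ (by norm_num)) L₂ hL₂
    exact ⟨L, by rw [pow_succ' _ (d + 1)]; exact hL⟩

/-- if `K` is nonempty compact metrizable of fd-height `k+1` then there is
an `8^(k+1)`-good map of `C_p(I)` onto `C_p(K)`; in particular `I` ℓ-dominates `K`. -/
theorem exists_eight_pow_good_of_fdHeight
    (K : Type*) [TopologicalSpace K] [CompactSpace K]
    [TopologicalSpace.MetrizableSpace K] [Nonempty K] (k : ℕ)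
    (h1 : fdDerived K ((k : Ordinal) + 1) = ∅)
    (h2 : fdDerived K (k : Ordinal) ≠ ∅) :
    (∃ L : C(unitInterval, ℝ) →ₗ[ℝ] C(K, ℝ),
        IsCGoodMap ((8 : ℝ) ^ (k + 1)) L ∧ Surjective L) ∧
      LDominates unitInterval K := by
  let _ : MetricSpace K := TopologicalSpace.metrizableSpaceMetric K
  have h1' : auxS K (k + 1) = ∅ := by
    rw [aux_fdDerived_succ, auxS_eq] at h1
    exact h1
  rw [auxS_eq] at h2
  have hcomp : ∀ j : ℕ, CompactSpace (auxS K j) := fun j =>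
    isCompact_iff_compactSpace.1 (aux_closed_fd K j).isCompact
  obtain ⟨L, hL⟩ := aux_main K (auxS K) (fun j => rfl) k h1'
    (Set.nonempty_iff_ne_empty.2 h2) k 0 (by omega)
  have h0 : auxS K 0 = univ := rfl
  obtain ⟨L', hL'⟩ := aux_transport ((Homeomorph.setCongr h0).trans (Homeomorph.Set.univ K)) _ L hL
  have hs : Surjective L' := fun f => by
    obtain ⟨g, hg, _⟩ := hL'.2.2 f
    exact ⟨g, hg⟩
  exact ⟨⟨L', hL', hs⟩, L', hL'.1, hs⟩

end
end

section
/- Suppose a Tychonoff space X ℓ-dominates a Tychonoff space Y, and X is hemicompact. Then Y is hemicompact if and only if Y is a μ-space. -/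
open Set Function

noncomputable section

theorem aux_sigma {X : Type*} [TopologicalSpace X] (hX : Hemicompact X) : SigmaCompactSpace X := by
  obtain ⟨K, hK, hc⟩ := hX
  refine ⟨⟨K, hK, ?_⟩⟩
  rw [eq_univ_iff_forall]
  intro x
  obtain ⟨n, hn⟩ := hc {x} isCompact_singleton
  exact mem_iUnion.2 ⟨n, hn rfl⟩

theorem aux_sum {X : Type*} [TopologicalSpace X] (f : ℕ → C(X, ℝ))
    (hf : ∀ x, ∃ N, ∀ᶠ z in nhds x, ∀ n, N ≤ n → f n z = 0) :
    ∃ F : (ℕ → ℝ) →ₗ[ℝ] C(X, ℝ), ∀ c x N, (∀ n, N ≤ n → f n x = 0) →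
      F c x = ∑ n ∈ Finset.range N, c n * f n x := by
  have key : ∀ (c : ℕ → ℝ) x N, (∀ n, N ≤ n → f n x = 0) →
      (∑ᶠ n, c n * f n x) = ∑ n ∈ Finset.range N, c n * f n x := by
    intro c x N h
    apply finsum_eq_sum_of_support_subset
    intro n hn
    by_contra hlt
    simp only [Finset.coe_range, mem_Iio, not_lt] at hlt
    exact hn (by simp [h n hlt])
  have hcont : ∀ c : ℕ → ℝ, Continuous fun x => ∑ᶠ n, c n * f n x := by
    intro c
    rw [continuous_iff_continuousAt]
    intro x
    obtain ⟨N, hN⟩ := hf x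
    have : ContinuousAt (fun z => ∑ n ∈ Finset.range N, c n * f n z) x := by
      apply Continuous.continuousAt
      fun_prop
    refine this.congr ?_
    filter_upwards [hN] with z hz
    exact (key c z N hz).symm
  refine ⟨{ toFun := fun c => ⟨_, hcont c⟩, map_add' := ?_, map_smul' := ?_ }, ?_⟩
  · intro a b
    ext x
    obtain ⟨N, hN⟩ := hf x
    have hN := hN.self_of_nhds
    simp only [ContinuousMap.coe_mk, ContinuousMap.add_apply]
    rw [key _ x N hN, key _ x N hN, key _ x N hN, ← Finset.sum_add_distrib]
    simp [add_mul]
  · intro a b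
    ext x
    obtain ⟨N, hN⟩ := hf x
    have hN := hN.self_of_nhds
    simp only [ContinuousMap.coe_mk, ContinuousMap.smul_apply, RingHom.id_apply]
    rw [key _ x N hN, key _ x N hN, Finset.smul_sum]
    simp [mul_assoc]
  · intro c x N h
    exact key c x N h

theorem aux_mu {X : Type*} [TopologicalSpace X] [T35Space X] [SigmaCompactSpace X] :
    MuSpace X := by
  intro B hB hb
  have : NormalSpace X := inferInstance
  rw [isCompact_iff_finite_subcover]
  intro ι U hU hcov
  have h1 : ∀ n, ∃ s : Finset ι, compactCovering X n ∩ B ⊆ ⋃ i ∈ s, U i := fun n =>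
    ((isCompact_compactCovering X n).inter_right hB).elim_finite_subcover U hU
      (inter_subset_right.trans hcov)
  choose s hs using h1
  have h2 : ∀ n, ∃ φ : C(X, ℝ), (∀ x ∈ compactCovering X n, φ x = 1) ∧
      (∀ x ∈ B, x ∉ (⋃ i ∈ s n, U i) → φ x = 0) ∧ ∀ x, 0 ≤ φ x := by
    intro n
    have hc1 : IsClosed (B ∩ (⋃ i ∈ s n, U i)ᶜ) :=
      hB.inter (isOpen_biUnion fun i _ => hU i).isClosed_compl
    have hc2 : IsClosed (compactCovering X n) := (isCompact_compactCovering X n).isClosed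
    have hd : Disjoint (B ∩ (⋃ i ∈ s n, U i)ᶜ) (compactCovering X n) := by
      rw [Set.disjoint_left]
      rintro x ⟨hx, hx'⟩ hx2
      exact hx' (hs n ⟨hx2, hx⟩)
    obtain ⟨φ, h0, h1, h01⟩ := exists_continuous_zero_one_of_isClosed hc1 hc2 hd
    exact ⟨φ, fun x hx => h1 hx, fun x hx hx' => h0 ⟨hx, hx'⟩, fun x => (h01 x).1⟩
  choose φ hφ1 hφ0 hφp using h2
  let f : ℕ → C(X, ℝ) := fun n =>
    ⟨fun x => max 0 (1 - ∑ k ∈ Finset.range (n + 1), 2 * φ k x), by fun_prop⟩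
  obtain ⟨F, hF⟩ := aux_sum f (by
    intro x
    obtain ⟨m, hm⟩ : ∃ m, x ∈ compactCovering X m := by
      have : x ∈ ⋃ n, compactCovering X n := by rw [iUnion_compactCovering]; trivial
      exact mem_iUnion.1 this
    refine ⟨m, ?_⟩
    have : ∀ᶠ z in nhds x, (1 / 2 : ℝ) < φ m z :=
      (φ m).continuous.continuousAt.eventually_const_lt (by rw [hφ1 m x hm]; norm_num)
    filter_upwards [this] with z hz n hn
    have : 2 * φ m z ≤ ∑ k ∈ Finset.range (n + 1), 2 * φ k z :=
      Finset.single_le_sum (f := fun k => 2 * φ k z)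
        (fun i _ => by have := hφp i z; positivity) (Finset.mem_range.2 (by omega))
    simp only [f, ContinuousMap.coe_mk]
    apply max_eq_left
    linarith)
  obtain ⟨M, hM⟩ := hb (F 1)
  obtain ⟨N, hN⟩ := exists_nat_gt M
  classical
  refine ⟨(Finset.range (N+1)).biUnion s, fun x hx => ?_⟩
  by_contra hnot
  have hz : ∀ k ≤ N, φ k x = 0 := by
    intro k hk
    apply hφ0 k x hx
    intro hx'
    apply hnot
    simp only [mem_iUnion, Finset.mem_biUnion, Finset.mem_range] at hx' ⊢
    obtain ⟨i, hi, hxi⟩ := hx'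
    exact ⟨i, ⟨k, by omega, hi⟩, hxi⟩
  obtain ⟨m, hm⟩ : ∃ m, x ∈ compactCovering X m := by
    have : x ∈ ⋃ n, compactCovering X n := by rw [iUnion_compactCovering]; trivial
    exact mem_iUnion.1 this
  have hfz : ∀ n, m + N ≤ n → f n x = 0 := by
    intro n hn
    have : 2 * φ m x ≤ ∑ k ∈ Finset.range (n + 1), 2 * φ k x :=
      Finset.single_le_sum (f := fun k => 2 * φ k x)
        (fun i _ => by have := hφp i x; positivity) (Finset.mem_range.2 (by omega))
    rw [hφ1 m x hm] at this
    simp only [f, ContinuousMap.coe_mk]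
    apply max_eq_left
    linarith
  have h3 := hF 1 x (m + N) hfz
  have h4 : (∑ n ∈ Finset.range N, (1 : ℕ → ℝ) n * f n x) ≤
      ∑ n ∈ Finset.range (m + N), (1 : ℕ → ℝ) n * f n x := by
    apply Finset.sum_le_sum_of_subset_of_nonneg
    · exact Finset.range_mono (by omega)
    · intro i _ _
      simp [f]
  have h5 : (∑ n ∈ Finset.range N, (1 : ℕ → ℝ) n * f n x) = N := by
    rw [Finset.sum_congr rfl (g := fun _ => (1 : ℝ))]
    · simp
    · intro n hn
      have hn := Finset.mem_range.1 hn
      have : ∑ k ∈ Finset.range (n + 1), 2 * φ k x = 0 := by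
        apply Finset.sum_eq_zero
        intro k hk
        have := Finset.mem_range.1 hk
        rw [hz k (by omega), mul_zero]
      simp [f, this]
  have h6 := hM x hx
  have := le_abs_self (F 1 x)
  linarith

theorem aux_supp {X Y : Type*} [TopologicalSpace X] [TopologicalSpace Y]
    (L : C(X, ℝ) →ₗ[ℝ] C(Y, ℝ)) (hL : @Continuous _ _ (ptTop X) (ptTop Y) L) (y : Y) :
    ∃ l : X →₀ ℝ, ∀ f, L f y = ∑ x ∈ l.support, l x * f x := by
  let ev : X → C(X, ℝ) →ₗ[ℝ] ℝ := fun x =>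
    { toFun := fun f => f x, map_add' := fun _ _ => rfl, map_smul' := fun _ _ => rfl }
  let ψ : C(X, ℝ) →ₗ[ℝ] ℝ :=
    { toFun := fun f => L f y, map_add' := fun _ _ => by simp, map_smul' := fun _ _ => by simp }
  have hmem : ψ ∈ Submodule.span ℝ (Set.range ev) := by
    rw [LinearMap.mem_span_iff_continuous]
    have h1 : @Continuous _ _ (ptTop X) _ ψ := by
      have h2 : @Continuous _ _ (ptTop Y) _ (fun g : C(Y, ℝ) => g y) := by
        letI := ptTop Y
        exact (continuous_apply y).comp continuous_induced_dom
      exact @Continuous.comp _ _ _ (ptTop X) (ptTop Y) _ _ _ h2 hL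
    have h3 : ptTop X = ⨅ i, TopologicalSpace.induced (ev i) inferInstance := by
      unfold ptTop Pi.topologicalSpace
      rw [induced_iInf]
      simp only [induced_compose]
      rfl
    rw [← h3]
    exact h1
  rw [Finsupp.mem_span_range_iff_exists_finsupp] at hmem
  obtain ⟨l, hl⟩ := hmem
  refine ⟨l, fun f => ?_⟩
  have := congrArg (fun T : C(X, ℝ) →ₗ[ℝ] ℝ => T f) hl
  simp only [Finsupp.sum, LinearMap.sum_apply, LinearMap.smul_apply] at this
  exact this.symm

theorem aux_hump {X Y : Type*} [TopologicalSpace X] [TopologicalSpace Y]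
    (L : C(X, ℝ) →ₗ[ℝ] C(Y, ℝ))
    (hl : ∀ y, ∃ l : X →₀ ℝ, ∀ f, L f y = ∑ x ∈ l.support, l x * f x)
    (C : Set Y) (hC : CBounded Y C) (h : C(X, ℝ)) :
    ∃ N : ℕ, ∀ f : C(X, ℝ), (∀ x, h x ≤ N → f x = 0) → ∀ y ∈ C, L f y = 0 := by
  by_contra! hcon
  have h1 : ∀ N : ℕ, ∃ f : C(X, ℝ), (∀ x, h x ≤ N → f x = 0) ∧ ∃ y ∈ C, L f y = N := by
    intro N
    obtain ⟨f, hf, y, hy, hne⟩ := hcon N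
    refine ⟨((N : ℝ) / L f y) • f, fun x hx => by simp [hf x hx], y, hy, ?_⟩
    simp [hne]
  choose f hf0 y hy hfy using h1
  obtain ⟨F, hF⟩ := aux_sum f (by
    intro x
    obtain ⟨N, hN⟩ := exists_nat_gt (h x)
    refine ⟨N, ?_⟩
    filter_upwards [h.continuous.continuousAt.eventually_lt_const hN] with z hz n hn
    apply hf0
    have : (N : ℝ) ≤ n := by exact_mod_cast hn
    linarith)
  let T : C → (BoundedContinuousFunction ℕ ℝ) →L[ℝ] ℝ := fun y =>
    { toFun := fun c => L (F c) y
      map_add' := fun a b => by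
        rw [BoundedContinuousFunction.coe_add, map_add, map_add]; rfl
      map_smul' := fun a b => by
        rw [BoundedContinuousFunction.coe_smul]
        have : (fun x => a • b x) = a • (b : ℕ → ℝ) := rfl
        rw [this, map_smul, map_smul]; rfl
      cont := by
        obtain ⟨l, hl⟩ := hl y
        simp only [hl]
        refine continuous_finset_sum _ fun x _ => continuous_const.mul ?_
        obtain ⟨N, hN⟩ := exists_nat_gt (h x)
        have : ∀ c : BoundedContinuousFunction ℕ ℝ,
            F c x = ∑ n ∈ Finset.range N, c n * f n x := by
          intro c
          apply hF
          intro n hn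
          apply hf0
          have : (N : ℝ) ≤ n := by exact_mod_cast hn
          linarith
        simp only [this]
        refine continuous_finset_sum _ fun n _ => Continuous.mul ?_ continuous_const
        exact continuous_eval_const n }
  obtain ⟨M, hM⟩ := banach_steinhaus (g := T) (by
    intro c
    obtain ⟨M, hM⟩ := hC (L (F c))
    exact ⟨M, fun y => hM y y.2⟩)
  obtain ⟨n, hn⟩ := exists_nat_gt M
  let e : BoundedContinuousFunction ℕ ℝ :=
    BoundedContinuousFunction.ofNormedAddCommGroupDiscrete (fun k => if k = n then 1 else 0) 1 (by
      intro k; split_ifs <;> simp)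
  have he : ‖e‖ ≤ 1 := by
    apply BoundedContinuousFunction.norm_le_of_nonempty.2
    intro k
    change ‖(if k = n then (1 : ℝ) else 0)‖ ≤ 1
    split_ifs <;> simp
  have hFe : F e = f n := by
    ext x
    obtain ⟨N, hN⟩ := exists_nat_gt (h x)
    rw [hF e x (N + n + 1) (by
      intro k hk
      apply hf0
      have : (N : ℝ) ≤ k := by exact_mod_cast (by omega : N ≤ k)
      linarith)]
    have : ∀ k, e k = if k = n then (1 : ℝ) else 0 := fun k => rfl
    simp [this]
  have h3 := (T ⟨y n, hy n⟩).le_opNorm e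
  have h4 : T ⟨y n, hy n⟩ e = n := by
    change L (F e) (y n) = n
    rw [hFe, hfy]
  rw [h4] at h3
  have h5 := hM ⟨y n, hy n⟩
  have h6 : ‖T ⟨y n, hy n⟩‖ * ‖e‖ ≤ ‖T ⟨y n, hy n⟩‖ * 1 :=
    mul_le_mul_of_nonneg_left he (ContinuousLinearMap.opNorm_nonneg _)
  simp only [Real.norm_natCast] at h3
  linarith

theorem aux_suppBdd {X Y : Type*} [TopologicalSpace X] [T35Space X] [TopologicalSpace Y]
    (L : C(X, ℝ) →ₗ[ℝ] C(Y, ℝ))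
    (l : Y → X →₀ ℝ) (hl : ∀ y f, L f y = ∑ x ∈ (l y).support, l y x * f x)
    (C : Set Y) (hC : CBounded Y C) :
    CBounded X {x | ∃ y ∈ C, x ∈ (l y).support} := by
  intro h
  obtain ⟨N, hN⟩ := aux_hump L (fun y => ⟨l y, hl y⟩) C hC ⟨fun x => |h x|, by fun_prop⟩
  refine ⟨N, ?_⟩
  rintro x ⟨y, hy, hx⟩
  by_contra! hlt
  classical
  have hcl : IsClosed ({z | |h z| ≤ N} ∪ ((l y).support.erase x : Set X)) :=
    (isClosed_le (by fun_prop) continuous_const).union (Finset.finite_toSet _).isClosed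
  obtain ⟨f, hf, hfx, hf1⟩ := CompletelyRegularSpace.completely_regular x _ hcl (by
    simp [hlt])
  let g : C(X, ℝ) := ⟨fun z => 1 - (f z : ℝ), by fun_prop⟩
  have h1 : L g y = 0 := hN g (by
    intro z hz
    have : f z = 1 := hf1 (Or.inl hz)
    simp [g, this]) y hy
  rw [hl, Finset.sum_eq_single x] at h1
  · simp [g, hfx] at h1
    simp [h1] at hx
  · intro z hz hzx
    have : f z = 1 := hf1 (Or.inr (by simp at hz ⊢; exact ⟨hz, hzx⟩))
    simp [g, this]
  · intro h; exact absurd hx h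

theorem aux_main_s10 {X Y : Type*} [TopologicalSpace X] [T35Space X] [TopologicalSpace Y]
    [SigmaCompactSpace X] (L : C(X, ℝ) →ₗ[ℝ] C(Y, ℝ))
    (hL : @Continuous _ _ (ptTop X) (ptTop Y) L) (C : Set Y) (hC : CBounded Y C) :
    ∃ A : Set X, IsCompact A ∧ ∃ M : ℝ, ∀ y ∈ C, ∀ f : C(X, ℝ), ∀ r : ℝ, 0 ≤ r →
      (∀ x ∈ A, |f x| ≤ r) → |L f y| ≤ M * r := by
  choose l hl using aux_supp L hL
  have hb := aux_suppBdd L l hl C hC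
  have hNorm : NormalSpace X := inferInstance
  set S := {x | ∃ y ∈ C, x ∈ (l y).support} with hS
  have hA : IsCompact (closure S) := by
    apply aux_mu _ isClosed_closure
    intro f
    obtain ⟨M, hM⟩ := hb f
    refine ⟨M, ?_⟩
    have : closure S ⊆ {x | |f x| ≤ M} :=
      closure_minimal hM (isClosed_le (by fun_prop) continuous_const)
    exact this
  refine ⟨closure S, hA, ?_⟩
  haveI : CompactSpace (closure S) := isCompact_iff_compactSpace.1 hA
  have hmem : ∀ y ∈ C, ∀ x ∈ (l y).support, x ∈ closure S := fun y hy x hx =>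
    subset_closure ⟨y, hy, hx⟩
  let T : C → C(closure S, ℝ) →L[ℝ] ℝ := fun y =>
    ∑ x ∈ (l y).support.attach, l y x • ContinuousMap.evalCLM ℝ (⟨x, hmem y y.2 x x.2⟩ : closure S)
  have hT : ∀ (y : C) (f : C(X, ℝ)), T y (f.restrict (closure S)) = L f y := by
    intro y f
    rw [hl, ← Finset.sum_attach]
    simp [T, ContinuousLinearMap.sum_apply]
  obtain ⟨M, hM⟩ := banach_steinhaus (g := T) (by
    intro c
    obtain ⟨f, hf⟩ := ContinuousMap.exists_restrict_eq isClosed_closure c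
    obtain ⟨M, hM⟩ := hC (L f)
    refine ⟨M, fun y => ?_⟩
    rw [← hf, hT]
    exact hM y y.2)
  refine ⟨M, fun y hy f r hr hfr => ?_⟩
  have h1 := (T ⟨y, hy⟩).le_opNorm (f.restrict (closure S))
  rw [hT, Real.norm_eq_abs] at h1
  refine h1.trans ?_
  have h2 : ‖f.restrict (closure S)‖ ≤ r := by
    rw [ContinuousMap.norm_le _ hr]
    intro x
    exact hfr x x.2
  exact mul_le_mul (hM ⟨y, hy⟩) h2 (norm_nonneg _) ((norm_nonneg _).trans (hM ⟨y, hy⟩))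

/-- if a hemicompact Tychonoff space ℓ-dominates `Y`, then `Y` is
hemicompact iff `Y` is a μ-space. -/
theorem hemicompact_iff_muSpace_of_ellDominated
    (X Y : Type*) [TopologicalSpace X] [T35Space X] [TopologicalSpace Y] [T35Space Y]
    (h : LDominates X Y) (hX : Hemicompact X) :
    Hemicompact Y ↔ MuSpace Y := by
  haveI := aux_sigma hX
  obtain ⟨L, hL, hsurj⟩ := h
  constructor
  · intro hY
    haveI := aux_sigma hY
    exact aux_mu
  intro hmu
  obtain ⟨K, hK, hcof⟩ := hX
  let B : ℕ → ℕ → Set Y := fun n m => {y | ∀ f : C(X, ℝ), ∀ r : ℝ, 0 ≤ r →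
      (∀ x ∈ K n, |f x| ≤ r) → |L f y| ≤ m * r}
  refine ⟨fun i => B i.unpair.1 i.unpair.2, fun i => ?_, fun C hC => ?_⟩
  · apply hmu
    · simp only [B, setOf_forall]
      refine isClosed_iInter fun f => isClosed_iInter fun r => isClosed_iInter fun _ =>
        isClosed_iInter fun _ => isClosed_le (by fun_prop) continuous_const
    · intro f
      obtain ⟨g, rfl⟩ := hsurj f
      obtain ⟨r, hr⟩ := (hK i.unpair.1).exists_bound_of_continuousOn g.continuous.continuousOn
      refine ⟨i.unpair.2 * max r 0, fun y hy => hy g _ (le_max_right _ _) fun x hx => ?_⟩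
      exact (hr x hx).trans (le_max_left _ _)
  · obtain ⟨A, hA, M, hM⟩ := aux_main_s10 L hL C (by
      intro f
      obtain ⟨r, hr⟩ := hC.exists_bound_of_continuousOn f.continuous.continuousOn
      exact ⟨r, hr⟩)
    obtain ⟨n, hn⟩ := hcof A hA
    obtain ⟨m, hm⟩ := exists_nat_ge M
    refine ⟨Nat.pair n m, fun y hy => ?_⟩
    simp only [Nat.unpair_pair]
    intro f r hr hfr
    exact (hM y hy f r hr fun x hx => hfr x (hn hx)).trans (mul_le_mul_of_nonneg_right hm hr)

end
end

section
/- Suppose a Tychonoff space X ℓ-dominates a Tychonoff space Y, and X is a k_ω space. Then Y is a k_ω space if and only if Y is a μ-space. -/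
open Set Function

noncomputable section

open Topology Filter Uniformity

lemma aux_nhds_basis {X : Type*} [TopologicalSpace X] (f : C(X, ℝ)) :
    (𝓝 f).HasBasis (fun p : Set X × ℝ => IsCompact p.1 ∧ 0 < p.2)
      (fun p => {g : C(X, ℝ) | ∀ x ∈ p.1, |g x - f x| < p.2}) := by
  have h := nhds_basis_uniformity' (x := f)
    ((Metric.uniformity_basis_dist (α := ℝ)).compactConvergenceUniformity (α := X))
  refine h.to_hasBasis (fun p hp => ⟨p, hp, ?_⟩) (fun p hp => ⟨p, hp, ?_⟩)
  · intro g hg x hx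
    have := hg x hx
    simpa [Real.dist_eq, abs_sub_comm] using this
  · intro g hg x hx
    have := hg x hx
    simpa [Real.dist_eq, abs_sub_comm] using this

lemma aux_baire {E : Type*} [AddCommGroup E] [Module ℝ E] [TopologicalSpace E]
    [IsTopologicalAddGroup E] [ContinuousSMul ℝ E] [BaireSpace E] (T : Set E)
    (hc : IsClosed T) (hconv : Convex ℝ T) (hsym : ∀ x ∈ T, -x ∈ T)
    (habs : ∀ x, ∃ n : ℕ, ((n : ℝ) + 1)⁻¹ • x ∈ T) : T ∈ 𝓝 (0 : E) := by
  have hne : Nonempty E := ⟨0⟩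
  obtain ⟨n, x, hx⟩ := nonempty_interior_of_iUnion_of_closed
    (f := fun n : ℕ => (fun x : E => ((n : ℝ) + 1)⁻¹ • x) ⁻¹' T)
    (fun n => hc.preimage (continuous_const_smul _))
    (by ext x; simpa using habs x)
  have hx' := mem_interior_iff_mem_nhds.1 hx
  set c : ℝ := (n : ℝ) + 1 with hcdef
  have hc0 : c ≠ 0 := by positivity
  have ht : Tendsto (fun z : E => x + (2 * c) • z) (𝓝 0) (𝓝 x) := by
    have : Continuous (fun z : E => x + (2 * c) • z) := by fun_prop
    simpa using this.tendsto 0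
  filter_upwards [ht hx'] with z hz
  have h1 : c⁻¹ • (x + (2 * c) • z) ∈ T := hz
  have h2 : -(c⁻¹ • x) ∈ T := by
    have h4 : x ∈ (fun x : E => c⁻¹ • x) ⁻¹' T := mem_of_mem_nhds hx'
    exact hsym _ h4
  have h3 := hconv h1 h2 (a := 1/2) (b := 1/2) (by norm_num) (by norm_num) (by norm_num)
  convert h3 using 1
  rw [smul_add, smul_smul, show c⁻¹ * (2 * c) = 2 by field_simp]
  module

lemma aux_CBaire {X : Type*} [TopologicalSpace X] [T2Space X] (hX : KOmegaSpace X) :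
    BaireSpace C(X, ℝ) := by
  obtain ⟨K, hK, hmono, hcof, hcoh⟩ := hX
  have : CompactlyCoherentSpace X := by
    apply CompactlyCoherentSpace.of_isClosed
    intro A hA
    apply hcoh
    intro n
    obtain ⟨F, hF, h⟩ := isClosed_induced_iff.1 (hA (K n) (hK n))
    refine ⟨F, hF, ?_⟩
    rw [inter_comm A, inter_comm F]
    exact (Subtype.preimage_coe_eq_preimage_coe_iff.1 h).symm
  have hm : Monotone K := monotone_nat_of_le_succ hmono
  have : IsCountablyGenerated (𝓤 C(X, ℝ)) := by
    refine HasBasis.isCountablyGenerated (ι := ℕ × ℕ) (p := fun _ => True)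
      (s := fun p => {fg | ∀ x ∈ K p.1, dist (fg.1 x) (fg.2 x) < 1 / ((p.2 : ℝ) + 1)}) ?_
    refine (Metric.uniformity_basis_dist_inv_nat_succ (α := ℝ)).compactConvergenceUniformity.to_hasBasis ?_ ?_
    · rintro ⟨C, n⟩ ⟨hC, -⟩
      obtain ⟨m, hm⟩ := hcof C hC
      exact ⟨(m, n), trivial, fun fg h x hx => h x (hm hx)⟩
    · rintro ⟨m, n⟩ -
      exact ⟨(K m, n), ⟨hK m, trivial⟩, fun fg h x hx => h x hx⟩
  infer_instance

lemma aux_NS {Y : Type*} [TopologicalSpace Y] [T2Space Y] [NormalSpace Y] (hY : MuSpace Y)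
    (T : Set C(Y, ℝ))
    (hc : IsClosed T) (hconv : Convex ℝ T) (hsym : ∀ x ∈ T, -x ∈ T)
    (habs : ∀ x, ∃ n : ℕ, ((n : ℝ) + 1)⁻¹ • x ∈ T) : T ∈ 𝓝 (0 : C(Y, ℝ)) := by
  have h0 : (0 : C(Y, ℝ)) ∈ T := by
    obtain ⟨n, hn⟩ := habs 0
    simpa using hn
  let good : Set Y → Prop := fun U => IsOpen U ∧ ∀ f : C(Y, ℝ), (∀ y ∉ U, f y = 0) → f ∈ T
  let S : Set Y := (⋃₀ {U | good U})ᶜ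
  have hSc : IsClosed S := by
    apply IsOpen.isClosed_compl
    exact isOpen_sUnion fun U hU => hU.1
  have hSb : CBounded Y S := by
    intro F
    by_contra hcon
    push Not at hcon
    have hex : ∀ k : ℕ, ∃ y ∈ S, (k : ℝ) < |F y| := fun k => hcon k
    choose y hyS hyk using hex
    let U : ℕ → Set Y := fun k => {z | |F (y k)| - 1 < |F z|}
    have hUo : ∀ k, IsOpen (U k) := fun k => by
      apply isOpen_lt <;> fun_prop
    have hf : ∀ k, ∃ f : C(Y, ℝ), (∀ z ∉ U k, f z = 0) ∧ f ∉ T := by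
      intro k
      by_contra hcc
      push Not at hcc
      exact hyS k ⟨U k, ⟨hUo k, hcc⟩, by simp [U]⟩
    choose f hfU hfT using hf
    have hlf : LocallyFinite (fun k => support (fun p : (ℕ → ℝ) × Y => p.1 k * f k p.2)) := by
      intro p
      refine ⟨{q | |F q.2| < |F p.2| + 1}, (isOpen_lt (by fun_prop) (by fun_prop)).mem_nhds (by simp), ?_⟩
      obtain ⟨N, hN⟩ := exists_nat_gt (|F p.2| + 2)
      refine (Set.finite_lt_nat N).subset ?_
      rintro k ⟨q, hq1, hq2⟩
      have hqU : q.2 ∈ U k := by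
        by_contra h
        exact hq1 (by simp [hfU k _ h])
      have h1 := (show |F (y k)| - 1 < |F q.2| from hqU)
      have h2 : |F q.2| < |F p.2| + 1 := hq2
      have h3 := hyk k
      have : (k : ℝ) < N := by linarith
      exact_mod_cast this
    have hcont : Continuous (fun p : (ℕ → ℝ) × Y => ∑ᶠ k, p.1 k * f k p.2) :=
      continuous_finsum (fun k => by fun_prop) hlf
    let Φ : (ℕ → ℝ) → C(Y, ℝ) := fun c =>
      ⟨fun z => ∑ᶠ k, c k * f k z, hcont.comp (by fun_prop : Continuous fun z : Y => (c, z))⟩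
    have hΦ : Continuous Φ := ContinuousMap.continuous_of_continuous_uncurry Φ hcont
    have hfin : ∀ (c : ℕ → ℝ) z, (support fun k => c k * f k z).Finite := fun c z =>
      hlf.point_finite (c, z)
    have hadd : ∀ c d, Φ (c + d) = Φ c + Φ d := by
      intro c d
      ext z
      change ∑ᶠ k, (c k + d k) * f k z = ∑ᶠ k, c k * f k z + ∑ᶠ k, d k * f k z
      rw [← finsum_add_distrib (hfin c z) (hfin d z)]
      simp only [add_mul]
    have hsmul : ∀ (a : ℝ) c, Φ (a • c) = a • Φ c := by
      intro a c
      ext z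
      change ∑ᶠ k, (a * c k) * f k z = a * ∑ᶠ k, c k * f k z
      rw [mul_finsum]
      simp only [mul_assoc]
    have hnb : Φ ⁻¹' T ∈ 𝓝 (0 : ℕ → ℝ) := by
      apply aux_baire _ (hc.preimage hΦ)
      · intro c hc d hd a b ha hb hab
        change Φ _ ∈ T
        rw [hadd, hsmul, hsmul]
        exact hconv hc hd ha hb hab
      · intro c hc
        change Φ _ ∈ T
        rw [← neg_one_smul ℝ c, hsmul, neg_one_smul]
        exact hsym _ hc
      · intro c
        obtain ⟨n, hn⟩ := habs (Φ c)
        refine ⟨n, ?_⟩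
        change Φ _ ∈ T
        rwa [hsmul]
    rw [nhds_pi, Filter.mem_pi] at hnb
    obtain ⟨I, hI, t, ht, hsub⟩ := hnb
    obtain ⟨k, hk⟩ := hI.infinite_compl.nonempty
    have hmem : Pi.single k (1 : ℝ) ∈ Φ ⁻¹' T := by
      apply hsub
      intro i hi
      have : i ≠ k := fun h => hk (h ▸ hi)
      rw [Pi.single_eq_of_ne this]
      exact mem_of_mem_nhds (ht i)
    apply hfT k
    have : Φ (Pi.single k (1 : ℝ)) = f k := by
      ext z
      change ∑ᶠ j, (Pi.single k (1 : ℝ) : ℕ → ℝ) j * f j z = f k z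
      rw [finsum_eq_single _ k (fun j hj => by rw [Pi.single_eq_of_ne hj, zero_mul])]
      simp
    rw [← this]
    exact hmem
  have hSk : IsCompact S := hY S hSc hSb
  -- functions vanishing on a neighbourhood of S
  have hB : ∀ (f : C(Y, ℝ)) (W : Set Y), IsOpen W → S ⊆ W → (∀ y ∈ W, f y = 0) → f ∈ T := by
    intro f W hW hSW hfW
    let P : Set Y → Prop := fun U => IsOpen U ∧
      ∀ ρ : C(Y, ℝ), (∀ y ∉ U, ρ y = 0) → ∀ c : ℝ, c • (ρ * f) ∈ T
    have hcov : ∀ z : Y, ∃ U, P U ∧ z ∈ U := by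
      intro z
      by_cases hz : z ∈ S
      · refine ⟨W, ⟨hW, fun ρ hρ c => ?_⟩, hSW hz⟩
        have : c • (ρ * f) = 0 := by
          ext w
          by_cases hw : w ∈ W
          · simp [hfW w hw]
          · simp [hρ w hw]
        rw [this]; exact h0
      · simp only [S, mem_compl_iff, not_not] at hz
        obtain ⟨U, hU, hzU⟩ := hz
        refine ⟨U, ⟨hU.1, fun ρ hρ c => hU.2 _ fun w hw => ?_⟩, hzU⟩
        simp [hρ w hw]
    have hadd : ∀ g h : C(Y, ℝ), (∀ c : ℝ, c • g ∈ T) → (∀ c : ℝ, c • h ∈ T) →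
        ∀ c : ℝ, c • (g + h) ∈ T := by
      intro g h hg hh c
      have := hconv (hg (2 * c)) (hh (2 * c)) (a := 1/2) (b := 1/2) (by norm_num) (by norm_num)
        (by norm_num)
      convert this using 1
      module
    rw [← hc.closure_eq, mem_closure_iff_nhds_basis (aux_nhds_basis f)]
    rintro ⟨C, ε⟩ ⟨hC, hε⟩
    obtain ⟨t, ht⟩ := hC.elim_finite_subcover (fun U : {U // P U} => U.1) (fun U => U.2.1)
      (fun z _ => by
        obtain ⟨U, hU, hz⟩ := hcov z
        exact mem_iUnion.2 ⟨⟨U, hU⟩, hz⟩)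
    obtain ⟨ρ, hρ⟩ := PartitionOfUnity.exists_isSubordinate_of_locallyFinite hC.isClosed
      (fun U : t => U.1.1) (fun U => U.1.2.1) (locallyFinite_of_finite _)
      (fun z hz => by
        obtain ⟨U, hU, hzU⟩ := mem_iUnion₂.1 (ht hz)
        exact mem_iUnion.2 ⟨⟨U, hU⟩, hzU⟩)
    refine ⟨∑ i, ρ i * f, ?_, ?_⟩
    · have : ∀ c : ℝ, c • (∑ i, ρ i * f) ∈ T := by
        refine Finset.sum_induction (fun i => ρ i * f) (fun h => ∀ c : ℝ, c • h ∈ T) hadd ?_ ?_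
        · intro c; simpa using h0
        · intro i _ 
          refine i.1.2.2 _ ?_
          intro w hw
          exact image_eq_zero_of_notMem_tsupport fun h => hw (hρ i h)
      simpa using this 1
    · intro z hz
      have h1 := ρ.sum_eq_one hz
      rw [finsum_eq_sum_of_fintype] at h1
      have : (∑ i, ρ i * f) z = f z := by
        simp only [ContinuousMap.coe_sum, Finset.sum_apply, ContinuousMap.coe_mul, Pi.mul_apply]
        rw [← Finset.sum_mul, h1, one_mul]
      rw [this]
      simpa using hε
  -- small bounded functions
  obtain ⟨δ, hδ, hD⟩ : ∃ δ > 0, ∀ f : C(Y, ℝ), (∀ y, |f y| ≤ δ) → f ∈ T := by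
    let Φ : BoundedContinuousFunction Y ℝ → C(Y, ℝ) := fun f => f.toContinuousMap
    have hΦ : Continuous Φ := by
      apply ContinuousMap.continuous_of_continuous_uncurry
      change Continuous fun p : BoundedContinuousFunction Y ℝ × Y => p.1 p.2
      fun_prop
    have hnb : Φ ⁻¹' T ∈ 𝓝 0 := by
      apply aux_baire _ (hc.preimage hΦ)
      · intro c hc d hd a b ha hb hab
        exact hconv hc hd ha hb hab
      · intro c hc
        exact hsym _ hc
      · intro c
        obtain ⟨n, hn⟩ := habs (Φ c)
        exact ⟨n, hn⟩
    obtain ⟨δ, hδ, hsub⟩ := Metric.nhds_basis_closedBall.mem_iff.1 hnb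
    refine ⟨δ, hδ, fun f hf => ?_⟩
    have := @hsub (BoundedContinuousFunction.ofNormedAddCommGroup f f.continuous δ hf) (by
      rw [mem_closedBall_zero_iff]
      exact BoundedContinuousFunction.norm_ofNormedAddCommGroup_le _ hδ.le _)
    exact this
  rw [(aux_nhds_basis _).mem_iff]
  refine ⟨(S, δ / 2), ⟨hSk, by simpa using hδ⟩, fun f hf => ?_⟩
  replace hf : ∀ x ∈ S, |f x| < δ / 2 := by simpa using hf
  let q : C(Y, ℝ) := ⟨fun y => max (-(δ/2)) (min (δ/2) (f y)), by fun_prop⟩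
  have hq1 : (2 : ℝ) • q ∈ T := by
    apply hD
    intro y
    change |2 * max (-(δ/2)) (min (δ/2) (f y))| ≤ δ
    rw [abs_le]
    have h1 : -(δ/2) ≤ max (-(δ/2)) (min (δ/2) (f y)) := le_max_left _ _
    have h2 : max (-(δ/2)) (min (δ/2) (f y)) ≤ δ/2 := max_le (by linarith) (min_le_left _ _)
    constructor <;> linarith
  have hq2 : (2 : ℝ) • (f - q) ∈ T := by
    apply hB _ {y | |f y| < δ / 2} (isOpen_lt (by fun_prop) (by fun_prop)) hf
    intro y hy
    have hy' := abs_lt.1 (show |f y| < δ / 2 from hy)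
    change 2 * (f y - max (-(δ/2)) (min (δ/2) (f y))) = 0
    rw [min_eq_right hy'.2.le, max_eq_right hy'.1.le]
    ring
  have := hconv hq1 hq2 (a := 1/2) (b := 1/2) (by norm_num) (by norm_num) (by norm_num)
  convert this using 1
  module

lemma aux_normal {Y : Type*} [TopologicalSpace Y] [T35Space Y] (K : ℕ → Set Y)
    (hK : ∀ n, IsCompact (K n)) (hcov : ∀ y, ∃ n, y ∈ K n) : NormalSpace Y := by
  have : SigmaCompactSpace Y := ⟨⟨K, hK, by ext y; simpa using hcov y⟩⟩
  infer_instance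

lemma aux_tietze {Y : Type*} [TopologicalSpace Y] [NormalSpace Y] (A : Set Y) (hA : IsClosed A)
    (φ : Y → ℝ) (hφ : ContinuousOn φ A) : ∃ F : C(Y, ℝ), ∀ y ∈ A, F y = φ y := by
  obtain ⟨F, hF⟩ := ContinuousMap.exists_restrict_eq hA ⟨A.domRestrict φ, hφ.domRestrict⟩
  exact ⟨F, fun y hy => DFunLike.congr_fun hF ⟨y, hy⟩⟩

lemma aux_forward {Y : Type*} [TopologicalSpace Y] [T35Space Y] (h : KOmegaSpace Y) :
    MuSpace Y := by
  obtain ⟨K, hK, hmono, hcof, hcoh⟩ := h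
  have hm : Monotone K := monotone_nat_of_le_succ hmono
  have hcov : ∀ y, ∃ n, y ∈ K n := fun y => by
    obtain ⟨n, hn⟩ := hcof {y} isCompact_singleton
    exact ⟨n, hn rfl⟩
  have := aux_normal K hK hcov
  intro B hB hbd
  by_cases hex : ∃ n, B ⊆ K n
  · obtain ⟨n, hn⟩ := hex
    exact (hK n).of_isClosed_subset hB hn
  exfalso
  push Not at hex
  simp only [not_subset] at hex
  choose y hyB hyK using hex
  have hcl : ∀ A : Set Y, A ⊆ range y → IsClosed A := by
    intro A hA
    apply hcoh
    intro n
    refine ⟨A ∩ K n, ?_, by rw [inter_assoc, inter_self]⟩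
    apply Set.Finite.isClosed
    refine ((Set.finite_lt_nat n).image y).subset ?_
    rintro z ⟨hz, hzn⟩
    obtain ⟨k, rfl⟩ := hA hz
    refine ⟨k, ?_, rfl⟩
    by_contra hk
    exact hyK k (hm (not_lt.1 hk) hzn)
  choose N hN using hcov
  obtain ⟨F, hF⟩ := aux_tietze (range y) (hcl _ subset_rfl) (fun z => (N z : ℝ)) (by
    rw [continuousOn_iff_isClosed]
    intro t _
    refine ⟨_, hcl ((fun z => (N z : ℝ)) ⁻¹' t ∩ range y) inter_subset_right, ?_⟩
    rw [inter_assoc, inter_self])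
  obtain ⟨M, hM⟩ := hbd F
  obtain ⟨k, hk⟩ := exists_nat_gt M
  have h1 := hM _ (hyB k)
  rw [hF _ (mem_range_self k)] at h1
  have h2 : k < N (y k) := by
    by_contra hc
    exact hyK k (hm (not_lt.1 hc) (hN _))
  have h3 : (k : ℝ) < N (y k) := by exact_mod_cast h2
  have h4 := le_abs_self (N (y k) : ℝ)
  linarith

lemma aux_glue_s11 {Y : Type*} [TopologicalSpace Y] [NormalSpace Y] (D E : Set Y) (hD : IsClosed D)
    (hE : IsClosed E) (φ : C(Y, ℝ)) (h : ∀ y ∈ D ∩ E, φ y = 0) :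
    ∃ F : C(Y, ℝ), (∀ y ∈ D, F y = φ y) ∧ ∀ y ∈ E, F y = 0 := by
  classical
  let ψ : Y → ℝ := fun y => if y ∈ E then 0 else φ y
  have hψD : ∀ y ∈ D, ψ y = φ y := by
    intro y hy
    by_cases hyE : y ∈ E
    · simp [ψ, hyE, h y ⟨hy, hyE⟩]
    · simp [ψ, hyE]
  have hψE : ∀ y ∈ E, ψ y = 0 := fun y hy => by simp [ψ, hy]
  obtain ⟨F, hF⟩ := aux_tietze (D ∪ E) (hD.union hE) ψ
    (((map_continuous φ).continuousOn.congr hψD).union_of_isClosed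
      ((continuousOn_const (c := (0 : ℝ))).congr hψE) hD hE)
  exact ⟨F, fun y hy => (hF y (Or.inl hy)).trans (hψD y hy),
    fun y hy => (hF y (Or.inr hy)).trans (hψE y hy)⟩

lemma aux_limit {X : Type*} [TopologicalSpace X] (K : ℕ → Set X) (hK : IsKOmegaSeq X K)
    (G : ℕ → C(X, ℝ)) (hG : ∀ n, ∀ x ∈ K n, |G (n + 1) x - G n x| ≤ (1/2) ^ n) :
    ∃ g : C(X, ℝ), ∀ x, Tendsto (fun n => G n x) atTop (𝓝 (g x)) := by
  obtain ⟨hKc, hmono, hcof, hcoh⟩ := hK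
  have hm : Monotone K := monotone_nat_of_le_succ hmono
  have hgeo : ∀ n, ∀ x ∈ K n, ∀ k : ℕ,
      dist (G (n + k) x) (G (n + (k + 1)) x) ≤ (1/2) ^ n * (1/2) ^ k := by
    intro n x hx k
    rw [dist_comm, Real.dist_eq, ← pow_add]
    exact hG (n + k) x (hm (Nat.le_add_right n k) hx)
  have hlim : ∀ x, ∃ a, Tendsto (fun n => G n x) atTop (𝓝 a) := by
    intro x
    obtain ⟨n, hn⟩ := hcof {x} isCompact_singleton
    have hc := cauchySeq_of_le_geometric (1/2 : ℝ) ((1/2) ^ n) (by norm_num) (hgeo n x (hn rfl))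
    obtain ⟨a, ha⟩ := cauchySeq_tendsto_of_complete hc
    refine ⟨a, (tendsto_add_atTop_iff_nat n).1 ?_⟩
    simpa only [add_comm] using ha
  choose g hg using hlim
  have hbound : ∀ n, ∀ x ∈ K n, dist (G n x) (g x) ≤ 2 * (1/2) ^ n := by
    intro n x hx
    have ht : Tendsto (fun k => G (n + k) x) atTop (𝓝 (g x)) := by
      have := (tendsto_add_atTop_iff_nat n).2 (hg x)
      simpa only [add_comm] using this
    have := dist_le_of_le_geometric_of_tendsto₀ (1/2 : ℝ) ((1/2) ^ n) (by norm_num)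
      (hgeo n x hx) ht
    have h2 : ((1/2 : ℝ)) ^ n / (1 - 1/2) = 2 * (1/2) ^ n := by ring
    rw [h2] at this
    simpa using this
  have hcont : ∀ j, ContinuousOn g (K j) := by
    intro j
    have hu : TendstoUniformlyOn (fun n x => G n x) g atTop (K j) := by
      rw [Metric.tendstoUniformlyOn_iff]
      intro ε hε
      have h0 : Tendsto (fun n : ℕ => 2 * (1/2 : ℝ) ^ n) atTop (𝓝 (2 * 0)) :=
        (tendsto_pow_atTop_nhds_zero_of_lt_one (by norm_num) (by norm_num)).const_mul 2
      rw [mul_zero] at h0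
      filter_upwards [h0.eventually_lt_const hε, eventually_ge_atTop j] with n hn hjn x hx
      rw [dist_comm]
      exact (hbound n x (hm hjn hx)).trans_lt hn
    exact hu.continuousOn (Frequently.of_forall fun n => (map_continuous (G n)).continuousOn)
  have hgc : Continuous g := by
    rw [continuous_iff_isClosed]
    intro t ht
    apply hcoh
    intro n
    exact continuousOn_iff_isClosed.1 (hcont n) t ht
  exact ⟨⟨g, hgc⟩, hg⟩

lemma aux_backward {X Y : Type*} [TopologicalSpace X] [T35Space X] [TopologicalSpace Y]
    [T35Space Y] (h : LDominates X Y) (hX : KOmegaSpace X) (hY : MuSpace Y) :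
    KOmegaSpace Y := by
  have hbaire := aux_CBaire hX
  obtain ⟨L, hLc, hLs⟩ := h
  obtain ⟨K, hKω⟩ := hX
  have hKω' := hKω
  obtain ⟨hKc, hKmono, hKcof, hKcoh⟩ := hKω
  have hKm : Monotone K := monotone_nat_of_le_succ hKmono
  have hptc : ∀ y, @Continuous C(X, ℝ) ℝ (ptTop X) _ (fun g => L g y) := by
    intro y
    have h1 : @Continuous C(Y, ℝ) ℝ (ptTop Y) _ (fun f => f y) :=
      @Continuous.comp _ _ _ (ptTop Y) _ _ (fun f : C(Y, ℝ) => (f : Y → ℝ)) (fun u => u y)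
        (continuous_apply y) (@continuous_induced_dom _ _ _ _)
    exact @Continuous.comp _ _ _ (ptTop X) (ptTop Y) _ _ _ h1 hLc
  have hpt : ∀ y, Continuous (fun g : C(X, ℝ) => L g y) := by
    intro y
    refine @Continuous.comp _ _ _ _ (ptTop X) _ id (fun g => L g y) (hptc y) ?_
    exact continuous_induced_rng.2 (continuous_pi fun x => continuous_eval_const x)
  have htend : ∀ (G : ℕ → C(X, ℝ)) (g : C(X, ℝ)),
      (∀ x, Tendsto (fun n => G n x) atTop (𝓝 (g x))) →
      ∀ y, Tendsto (fun n => L (G n) y) atTop (𝓝 (L g y)) := by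
    intro G g hg y
    have h1 := @Continuous.tendsto _ _ (ptTop X) _ _ (hptc y) g
    refine h1.comp ?_
    rw [ptTop, nhds_induced]
    exact tendsto_comap_iff.2 (tendsto_pi_nhds.2 hg)
  let B : ℕ → Set Y := fun n =>
    {y | ∀ g : C(X, ℝ), (∀ x ∈ K n, |g x| ≤ 1) → |L g y| ≤ n}
  have hbdK : ∀ (g : C(X, ℝ)) n, ∃ M : ℝ, 0 < M ∧ ∀ x ∈ K n, |g x| ≤ M := by
    intro g n
    obtain ⟨M, hM⟩ := (hKc n).exists_bound_of_continuousOn (map_continuous g).continuousOn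
    exact ⟨max M 1, by positivity, fun x hx => (hM x hx).trans (le_max_left _ _)⟩
  have hBm : Monotone B := by
    intro a b hab y hy g hg
    have hab' : (a : ℝ) ≤ b := by exact_mod_cast hab
    exact (hy g fun x hx => hg x (hKm hab hx)).trans hab'
  have hBcl : ∀ n, IsClosed (B n) := by
    intro n
    have : B n = ⋂ (g : C(X, ℝ)) (_ : ∀ x ∈ K n, |g x| ≤ 1), {y | |L g y| ≤ n} := by
      ext y; simp [B]
    rw [this]
    exact isClosed_iInter fun g => isClosed_iInter fun _ =>
      isClosed_le (by fun_prop) continuous_const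
  have hBc : ∀ n, IsCompact (B n) := by
    intro n
    refine hY _ (hBcl n) fun f => ?_
    obtain ⟨g, rfl⟩ := hLs f
    obtain ⟨M, hM0, hM⟩ := hbdK g n
    refine ⟨M * n, fun y hy => ?_⟩
    have h1 := hy (M⁻¹ • g) (fun x hx => by
      have := hM x hx
      simp only [ContinuousMap.coe_smul, Pi.smul_apply, smul_eq_mul, abs_mul, abs_inv,
        abs_of_pos hM0]
      rw [inv_mul_le_iff₀ hM0]; simpa using this)
    rw [map_smul] at h1
    simp only [ContinuousMap.coe_smul, Pi.smul_apply, smul_eq_mul, abs_mul, abs_inv,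
        abs_of_pos hM0] at h1
    rwa [inv_mul_le_iff₀ hM0] at h1
  have hBcof : ∀ C : Set Y, IsCompact C → ∃ n, C ⊆ B n := by
    intro C hC
    have hT : {g : C(X, ℝ) | ∀ y ∈ C, |L g y| ≤ 1} ∈ 𝓝 (0 : C(X, ℝ)) := by
      apply aux_baire
      · have : {g : C(X, ℝ) | ∀ y ∈ C, |L g y| ≤ 1} = ⋂ y ∈ C, {g | |L g y| ≤ 1} := by
          ext g; simp
        rw [this]
        exact isClosed_biInter fun y _ => isClosed_le (hpt y).abs continuous_const
      · intro g hg f hf a b ha hb hab y hy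
        have h1 := hg y hy
        have h2 := hf y hy
        rw [map_add, map_smul, map_smul]
        simp only [ContinuousMap.coe_add, ContinuousMap.coe_smul, Pi.add_apply, Pi.smul_apply,
          smul_eq_mul]
        calc |a * L g y + b * L f y| ≤ |a * L g y| + |b * L f y| := abs_add_le _ _
          _ = a * |L g y| + b * |L f y| := by rw [abs_mul, abs_mul, abs_of_nonneg ha, abs_of_nonneg hb]
          _ ≤ a * 1 + b * 1 := by gcongr
          _ = 1 := by linarith
      · intro g hg y hy
        simpa using hg y hy
      · intro g
        obtain ⟨M, hM⟩ := hC.exists_bound_of_continuousOn (map_continuous (L g)).continuousOn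
        obtain ⟨n, hn⟩ := exists_nat_gt M
        refine ⟨n, fun y hy => ?_⟩
        have h1 : |L g y| ≤ M := hM y hy
        have hp : (0 : ℝ) < (n : ℝ) + 1 := by positivity
        rw [map_smul]
        simp only [ContinuousMap.coe_smul, Pi.smul_apply, smul_eq_mul, abs_mul, abs_inv,
          abs_of_pos hp]
        rw [inv_mul_le_iff₀ hp]
        linarith
    obtain ⟨⟨Q, ε⟩, ⟨hQ, hε⟩, hsub⟩ := (aux_nhds_basis _).mem_iff.1 hT
    replace hε : 0 < ε := hε
    obtain ⟨n, hn⟩ := hKcof Q hQ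
    obtain ⟨N, hN⟩ := exists_nat_gt (2 / ε)
    refine ⟨max n N, fun y hy g hg => ?_⟩
    have h1 : (ε / 2) • g ∈ {g : C(X, ℝ) | ∀ y ∈ C, |L g y| ≤ 1} := by
      apply hsub
      intro x hx
      have := hg x (hKm (le_max_left n N) (hn hx))
      simp only [ContinuousMap.coe_smul, Pi.smul_apply, smul_eq_mul, ContinuousMap.coe_zero,
        Pi.zero_apply, sub_zero, abs_mul, abs_of_pos (half_pos hε)]
      nlinarith
    have h2 := h1 y hy
    rw [map_smul] at h2
    simp only [ContinuousMap.coe_smul, Pi.smul_apply, smul_eq_mul, abs_mul,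
      abs_of_pos (half_pos hε)] at h2
    have h3 : |L g y| ≤ 2 / ε := by
      rw [le_div_iff₀ hε]; linarith
    have h4 : (N : ℝ) ≤ (max n N : ℕ) := by exact_mod_cast le_max_right n N
    linarith
  have hBcov : ∀ y, ∃ n, y ∈ B n := fun y => by
    obtain ⟨n, hn⟩ := hBcof {y} isCompact_singleton
    exact ⟨n, hn rfl⟩
  have hnormal := aux_normal B hBc hBcov
  -- almost openness
  have hopen : ∀ n : ℕ, ∃ m : ℕ, ∃ ε : ℝ, 0 < ε ∧ ∀ h : C(Y, ℝ), (∀ y ∈ B m, |h y| < ε) →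
      ∀ C : Set Y, IsCompact C → ∀ η : ℝ, 0 < η → ∃ g : C(X, ℝ),
        (∀ x ∈ K n, |g x| ≤ (1/2) ^ n) ∧ ∀ y ∈ C, |L g y - h y| < η := by
    intro n
    let V : Set C(X, ℝ) := {g | ∀ x ∈ K n, |g x| ≤ (1/2) ^ n}
    have hV : Convex ℝ V := by
      intro g hg f hf a b ha hb hab x hx
      have h1 := hg x hx
      have h2 := hf x hx
      simp only [ContinuousMap.coe_add, ContinuousMap.coe_smul, Pi.add_apply, Pi.smul_apply,
          smul_eq_mul]
      calc |a * g x + b * f x| ≤ |a * g x| + |b * f x| := abs_add_le _ _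
          _ = a * |g x| + b * |f x| := by rw [abs_mul, abs_mul, abs_of_nonneg ha, abs_of_nonneg hb]
          _ ≤ a * (1/2) ^ n + b * (1/2) ^ n := by gcongr
          _ = (1/2) ^ n := by rw [← add_mul, hab, one_mul]
    have hT : closure (L '' V) ∈ 𝓝 (0 : C(Y, ℝ)) := by
      apply aux_NS hY _ isClosed_closure
      · exact (hV.linear_image L).closure
      · intro f hf
        refine map_mem_closure continuous_neg hf ?_
        rintro _ ⟨g, hg, rfl⟩
        exact ⟨-g, fun x hx => by simpa using hg x hx, map_neg L g⟩
      · intro f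
        obtain ⟨g, rfl⟩ := hLs f
        obtain ⟨M, hM0, hM⟩ := hbdK g n
        obtain ⟨k, hk⟩ := exists_nat_gt (M / (1/2) ^ n)
        refine ⟨k, subset_closure ⟨((k : ℝ) + 1)⁻¹ • g, fun x hx => ?_, map_smul L _ _⟩⟩
        have hp : (0 : ℝ) < (k : ℝ) + 1 := by positivity
        have h2 : (0 : ℝ) < (1/2) ^ n := by positivity
        simp only [ContinuousMap.coe_smul, Pi.smul_apply, smul_eq_mul, abs_mul, abs_inv,
          abs_of_pos hp]
        rw [inv_mul_le_iff₀ hp]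
        rw [div_lt_iff₀ h2] at hk
        have := hM x hx
        nlinarith
    obtain ⟨⟨Q, ε⟩, ⟨hQ, hε⟩, hsub⟩ := (aux_nhds_basis _).mem_iff.1 hT
    obtain ⟨m, hm⟩ := hBcof Q hQ
    refine ⟨m, ε, hε, fun h hh C hC η hη => ?_⟩
    have h1 : h ∈ closure (L '' V) := by
      apply hsub
      intro y hy
      simpa using hh y (hm hy)
    rw [mem_closure_iff_nhds_basis (aux_nhds_basis h)] at h1
    obtain ⟨_, ⟨g, hg, rfl⟩, hgC⟩ := h1 (C, η) ⟨hC, hη⟩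
    exact ⟨g, hg, hgC⟩
  choose m ε hε hop using hopen
  -- completeness
  have hcomplete : ∀ f : Y → ℝ, (∀ n, ∃ f' : C(Y, ℝ), ∀ y ∈ B n, f' y = f y) → Continuous f := by
    intro f hf
    let M : ℕ → ℕ := fun n => n + ∑ i ∈ Finset.range (n + 1), m i
    have hM1 : ∀ n, n ≤ M n := fun n => Nat.le_add_right _ _
    have hM2 : ∀ n, m n ≤ M n := fun n => by
      have : m n ≤ ∑ i ∈ Finset.range (n + 1), m i :=
        Finset.single_le_sum (f := m) (fun i _ => Nat.zero_le _) (by simp)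
      simp only [M]; omega
    have hM3 : ∀ n, M n ≤ M (n + 1) := fun n => by
      simp only [M]
      rw [Finset.sum_range_succ _ (n + 1)]; omega
    let e : ℕ → ℝ := fun n => min (ε n) (1 / ((n : ℝ) + 1))
    have he : ∀ n, 0 < e n := fun n => lt_min (hε n) (by positivity)
    let St : ℕ → Type _ := fun n => {g : C(X, ℝ) // ∀ y ∈ B (M n), |L g y - f y| < e n}
    have g0 : Nonempty (St 0) := by
      obtain ⟨f', hf'⟩ := hf (M 0)
      obtain ⟨g, rfl⟩ := hLs f'
      refine ⟨⟨g, fun y hy => ?_⟩⟩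
      rw [hf' y hy]; simpa using he 0
    have hstep : ∀ n (g : St n), ∃ g' : St (n + 1),
        ∀ x ∈ K n, |g'.1 x - g.1 x| ≤ (1/2) ^ n := by
      intro n g
      obtain ⟨f', hf'⟩ := hf (M (n + 1))
      obtain ⟨v, hv, hvC⟩ := hop n (f' - L g.1) (fun y hy => by
        have hyM : y ∈ B (M n) := hBm (hM2 n) hy
        have h1 := g.2 y hyM
        have h2 := hf' y (hBm (hM3 n) hyM)
        simp only [ContinuousMap.coe_sub, Pi.sub_apply]
        rw [h2, abs_sub_comm]
        exact h1.trans_le (min_le_left _ _)) (B (M (n + 1))) (hBc _) (e (n + 1)) (he _)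
      refine ⟨⟨g.1 + v, fun y hy => ?_⟩, fun x hx => ?_⟩
      · have h1 := hvC y hy
        have h2 := hf' y hy
        rw [map_add]
        simp only [ContinuousMap.coe_sub, Pi.sub_apply, ContinuousMap.coe_add, Pi.add_apply] at h1 ⊢
        rw [h2] at h1
        convert h1 using 2
        ring
      · simpa using hv x hx
    choose nxt hnxt using hstep
    let G : ∀ n, St n := fun n => Nat.rec (motive := St) (Classical.choice g0) nxt n
    obtain ⟨g, hg⟩ := aux_limit K hKω' (fun n => (G n).1) (fun n x hx => hnxt n (G n) x hx)
    have hlim := htend _ g hg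
    have : f = L g := by
      funext y
      refine tendsto_nhds_unique ?_ (hlim y)
      obtain ⟨N, hN⟩ := hBcov y
      rw [tendsto_iff_dist_tendsto_zero]
      refine squeeze_zero' (Eventually.of_forall fun n => dist_nonneg) ?_
        tendsto_one_div_add_atTop_nhds_zero_nat
      filter_upwards [eventually_ge_atTop N] with n hn
      have := (G n).2 y (hBm (hn.trans (hM1 n)) hN)
      rw [Real.dist_eq]
      exact this.le.trans (min_le_right _ _)
    rw [this]
    exact map_continuous _
  refine ⟨B, hBc, fun n => hBm (Nat.le_succ n), hBcof, fun A hA => ?_⟩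
  have hAB : ∀ n, IsClosed (A ∩ B n) := by
    intro n
    obtain ⟨F, hF, hFA⟩ := hA n
    rw [hFA]
    exact hF.inter (hBcl n)
  refine isClosed_of_closure_subset fun y0 hy0 => ?_
  by_contra hyA
  let St : ℕ → Type _ := fun n => {φ : C(Y, ℝ) // φ y0 = 1 ∧ ∀ y ∈ A ∩ B n, φ y = 0}
  have s0 : Nonempty (St 0) := by
    obtain ⟨F, hF1, hF2⟩ := aux_glue_s11 {y0} (A ∩ B 0) isClosed_singleton (hAB 0) 1 (by
      rintro y ⟨rfl, h, _⟩
      exact absurd h hyA)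
    exact ⟨⟨F, by simpa using hF1 y0 rfl, hF2⟩⟩
  have hstep : ∀ n (φ : St n), ∃ φ' : St (n + 1), ∀ y ∈ B n, φ'.1 y = φ.1 y := by
    intro n φ
    obtain ⟨F, hF1, hF2⟩ := aux_glue_s11 (B n ∪ {y0}) (A ∩ B (n + 1))
      ((hBcl n).union isClosed_singleton) (hAB (n + 1)) φ.1 (by
        rintro y ⟨h1 | h1, h2, h3⟩
        · exact φ.2.2 y ⟨h2, h1⟩
        · rw [mem_singleton_iff.1 h1] at h2
          exact absurd h2 hyA)
    exact ⟨⟨F, (hF1 y0 (Or.inr rfl)).trans φ.2.1, hF2⟩, fun y hy => hF1 y (Or.inl hy)⟩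
  choose nxt hnxt using hstep
  let Φ : ∀ n, St n := fun n => Nat.rec (motive := St) (Classical.choice s0) nxt n
  have hΦ : ∀ n k, ∀ y ∈ B n, (Φ (n + k)).1 y = (Φ n).1 y := by
    intro n k y hy
    induction k with
    | zero => rfl
    | succ k ih => exact (hnxt (n + k) (Φ (n + k)) y (hBm (Nat.le_add_right n k) hy)).trans ih
  choose N hN using hBcov
  let f : Y → ℝ := fun y => (Φ (N y)).1 y
  have hfB : ∀ n, ∀ y ∈ B n, (Φ n).1 y = f y := by
    intro n y hy
    have h1 := hΦ n (N y) y hy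
    have h2 := hΦ (N y) n y (hN y)
    rw [add_comm] at h2
    exact h1.symm.trans h2
  have hfc : Continuous f := hcomplete f fun n => ⟨(Φ n).1, hfB n⟩
  have hfA : A ⊆ {y | f y = 0} := fun y hy => (Φ (N y)).2.2 y ⟨hy, hN y⟩
  have h1 : f y0 = 0 := closure_minimal hfA (isClosed_eq hfc continuous_const) hy0
  have h2 : f y0 = 1 := (Φ (N y0)).2.1
  linarith

/-- if a k_ω Tychonoff space ℓ-dominates `Y`, then `Y` is k_ω iff `Y`
is a μ-space. -/
theorem kOmega_iff_muSpace_of_ellDominated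
    (X Y : Type*) [TopologicalSpace X] [T35Space X] [TopologicalSpace Y] [T35Space Y]
    (h : LDominates X Y) (hX : KOmegaSpace X) :
    KOmegaSpace Y ↔ MuSpace Y := by
  exact ⟨aux_forward, aux_backward h hX⟩

end
end
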